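/- arXiv:2202.04634 — 2 statements merged into one kernel-verified Lean document; each statement's English description precedes it below -/
import Mathlib

section
/- Fix ε > 0 and δ ∈ (0,1). Suppose there exists an optimal occupancy d*_0 with d*_0(s,a)/d^D(s,a) ≤ B_{w,0} for all (s,a), d^D = d^{π_D}, and the assumptions of the constrained analysis hold with B_w = B_{w,0} and α = α'_ε := ε/(4B_{f,0}): v*_{α'_ε,B_{w,0}} ∈ V, w*_{α'_ε,B_{w,0}} ∈ W, 0 ≤ w ≤ B_{w,0} for all w ∈ W, f M_f-strongly convex with |f'| ≤ B_{f',0} and |f| ≤ B_{f,0} on [0,B_{w,0}], ‖v‖_∞ ≤ B_{v,0} = (α'_ε·B_{f',0}+1)/(1−γ) for all v ∈ V. Then there is a universal constant C1 such that if n ≥ C1·(ε·B_{f,0} + 4·B_{w,0}·B_{e,0}·B_{f,0})²/(ε⁶·M_f²·(1−γ)⁴)·log(4|V||W|/δ) and n0 ≥ C1·(4·B_{v,0}·B_{f,0})²/(ε⁶·M_f²·(1−γ)²)·log(4|V|/δ), then PRO-RL with input α = α'_ε outputs π̂ with J(π*_0) − J(π̂) ≤ ε with probability at least 1−δ, where B_{e,0}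 = (1+γ)B_{v,0}+1. -/
open MeasureTheory
open scoped BigOperators ENNReal

namespace ProRL

/-- The discrete measure on a type induced by a real-valued weight function. -/
noncomputable def discMeasure {X : Type*} [MeasurableSpace X] (p : X → ℝ) : Measure X :=
  Measure.sum fun x => ENNReal.ofReal (p x) • Measure.dirac x

variable {S A : Type*} [Fintype S] [Fintype A]

/-- The `t`-step state-action distribution of policy `π` started from `μ0`. -/
noncomputable def saDist (P : S → A → S → ℝ) (μ0 : S → ℝ) (π : S → A → ℝ) :
    ℕ → S → A → ℝ
  | 0 => fun s a => μ0 s * π s a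
  | t + 1 => fun s a =>
      (∑ s' : S, ∑ a' : A, saDist P μ0 π t s' a' * P s' a' s) * π s a

/-- The discounted state-action occupancy `d^π(s,a)`. -/
noncomputable def occ (P : S → A → S → ℝ) (μ0 : S → ℝ) (γ : ℝ) (π : S → A → ℝ)
    (s : S) (a : A) : ℝ :=
  (1 - γ) * ∑' t : ℕ, γ ^ t * saDist P μ0 π t s a

/-- The (normalized) expected discounted return `J(π) = E_{d^π}[r]`. -/
noncomputable def Jret (P : S → A → S → ℝ) (r : S → A → ℝ) (μ0 : S → ℝ) (γ : ℝ)
    (π : S → A → ℝ) : ℝ :=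
  ∑ s : S, ∑ a : A, occ P μ0 γ π s a * r s a

/-- `π` is a (stationary, stochastic) policy. -/
def IsPolicy (π : S → A → ℝ) : Prop :=
  (∀ s a, 0 ≤ π s a) ∧ ∀ s, ∑ a : A, π s a = 1

/-- The Bellman residual `e_v(s,a) = r(s,a) + γ ∑_{s'} P(s'|s,a) v(s') − v(s)`. -/
noncomputable def eV (P : S → A → S → ℝ) (r : S → A → ℝ) (γ : ℝ) (v : S → ℝ)
    (s : S) (a : A) : ℝ :=
  r s a + γ * ∑ s' : S, P s a s' * v s' - v s

/-- The population Lagrangian `L_α(v,w)`. -/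
noncomputable def Lag (P : S → A → S → ℝ) (r : S → A → ℝ) (μ0 : S → ℝ) (γ : ℝ)
    (dD : S → A → ℝ) (f : ℝ → ℝ) (α : ℝ) (v : S → ℝ) (w : S → A → ℝ) : ℝ :=
  (1 - γ) * ∑ s : S, μ0 s * v s
    - α * ∑ s : S, ∑ a : A, dD s a * f (w s a)
    + ∑ s : S, ∑ a : A, dD s a * (w s a * eV P r γ v s a)

/-- The empirical Lagrangian `L̂_α(v,w)` built from the transition dataset `D`
(`D i = ((sᵢ,aᵢ), s'ᵢ)`, with `rᵢ = r sᵢ aᵢ`) and initial-state dataset `D0`. -/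
noncomputable def empLag (r : S → A → ℝ) (γ : ℝ) (f : ℝ → ℝ) (α : ℝ) {n n0 : ℕ}
    (D : Fin n → (S × A) × S) (D0 : Fin n0 → S) (v : S → ℝ) (w : S → A → ℝ) : ℝ :=
  (1 - γ) * ((n0 : ℝ)⁻¹ * ∑ j : Fin n0, v (D0 j))
    - α * ((n : ℝ)⁻¹ * ∑ i : Fin n, f (w (D i).1.1 (D i).1.2))
    + (n : ℝ)⁻¹ * ∑ i : Fin n,
        w (D i).1.1 (D i).1.2 *
          (r (D i).1.1 (D i).1.2 + γ * v (D i).2 - v (D i).1.1)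

/-- Per-state normalization of a state-action weight into a policy
(uniform where the state marginal is not positive). -/
noncomputable def normPolicy (d : S → A → ℝ) (s : S) (a : A) : ℝ :=
  if 0 < ∑ a' : A, d s a' then d s a / ∑ a' : A, d s a'
  else (Fintype.card A : ℝ)⁻¹

/-- Policy extraction from a density ratio `w` and a behavior policy `piD`
(uniform where the normalizer vanishes). -/
noncomputable def extractPolicy (piD w : S → A → ℝ) (s : S) (a : A) : ℝ :=
  if 0 < ∑ a' : A, w s a' * piD s a' then
    w s a * piD s a / ∑ a' : A, w s a' * piD s a'
  else (Fintype.card A : ℝ)⁻¹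

/-- Behavior policy `π_D(a|s)` obtained from the data distribution `d^D`. -/
noncomputable def behPolicy (dD : S → A → ℝ) : S → A → ℝ := normPolicy dD

/-- The state-action measure `d(s,a) = w(s,a)·d^D(s,a)`. -/
noncomputable def dstar (dD w : S → A → ℝ) : S → A → ℝ := fun s a => w s a * dD s a

/-- The weighted `L²(d^D)` norm of a state-action function. -/
noncomputable def l2nrm (dD g : S → A → ℝ) : ℝ :=
  Real.sqrt (∑ s : S, ∑ a : A, dD s a * g s a ^ 2)

/-- `‖π(·|s) − π'(·|s)‖₁`. -/
noncomputable def l1Pol (π π' : S → A → ℝ) (s : S) : ℝ := ∑ a : A, |π s a - π' s a|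

/-- `E_{s ∼ d}[‖π(·|s) − π'(·|s)‖₁]` where `d` is a state-action distribution. -/
noncomputable def expL1 (d π π' : S → A → ℝ) : ℝ :=
  ∑ s : S, (∑ a : A, d s a) * l1Pol π π' s

/-- The statistical error term `ε_stat`. -/
noncomputable def epsStat (γ α Bv Bf Bw Be δ : ℝ) (nV nW n n0 : ℕ) : ℝ :=
  (1 - γ) * Bv * Real.sqrt (2 * Real.log (4 * (nV : ℝ) / δ) / (n0 : ℝ))
    + (α * Bf + Bw * Be) *
        Real.sqrt (2 * Real.log (4 * ((nV : ℝ) * (nW : ℝ)) / δ) / (n : ℝ))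

/-- The Bellman flow equations for a state-action measure `d`. -/
def BellmanFlow (P : S → A → S → ℝ) (μ0 : S → ℝ) (γ : ℝ) (d : S → A → ℝ) : Prop :=
  ∀ s : S, ∑ a : A, d s a
    = (1 - γ) * μ0 s + γ * ∑ s' : S, ∑ a' : A, P s' a' s * d s' a'

/-- `(v,w)` is a saddle point of `max_{w ≥ 0} min_v L_α(v,w)`. -/
def IsSaddle (P : S → A → S → ℝ) (r : S → A → ℝ) (μ0 : S → ℝ) (γ : ℝ)
    (dD : S → A → ℝ) (f : ℝ → ℝ) (α : ℝ) (v : S → ℝ) (w : S → A → ℝ) : Prop :=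
  (∀ s a, 0 ≤ w s a) ∧
  (∀ v' : S → ℝ, Lag P r μ0 γ dD f α v w ≤ Lag P r μ0 γ dD f α v' w) ∧
  (∀ w' : S → A → ℝ, (∀ s a, 0 ≤ w' s a) →
    Lag P r μ0 γ dD f α v w' ≤ Lag P r μ0 γ dD f α v w)

/-- `(v,w)` is a saddle point of `max_{0 ≤ w ≤ Bw} min_v L_α(v,w)` (constrained LP). -/
def IsSaddleB (P : S → A → S → ℝ) (r : S → A → ℝ) (μ0 : S → ℝ) (γ : ℝ)
    (dD : S → A → ℝ) (f : ℝ → ℝ) (α Bw : ℝ) (v : S → ℝ) (w : S → A → ℝ) : Prop :=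
  (∀ s a, 0 ≤ w s a ∧ w s a ≤ Bw) ∧
  (∀ v' : S → ℝ, Lag P r μ0 γ dD f α v w ≤ Lag P r μ0 γ dD f α v' w) ∧
  (∀ w' : S → A → ℝ, (∀ s a, 0 ≤ w' s a ∧ w' s a ≤ Bw) →
    Lag P r μ0 γ dD f α v w' ≤ Lag P r μ0 γ dD f α v w)

/-- `(vhat, what)` is an exact max-min point of the empirical Lagrangian over `V × W`:
`vhat ∈ argmin_{v ∈ V} L̂(v, what)` and `what ∈ argmax_{w ∈ W} min_{v ∈ V} L̂(v, w)`. -/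
def IsProRLOutput (r : S → A → ℝ) (γ : ℝ) (f : ℝ → ℝ) (α : ℝ)
    (V : Finset (S → ℝ)) (W : Finset (S → A → ℝ)) {n n0 : ℕ}
    (D : Fin n → (S × A) × S) (D0 : Fin n0 → S)
    (vhat : S → ℝ) (what : S → A → ℝ) : Prop :=
  vhat ∈ V ∧ what ∈ W ∧
  (∀ v ∈ V, empLag r γ f α D D0 vhat what ≤ empLag r γ f α D D0 v what) ∧
  ∀ w ∈ W, ∀ vw ∈ V,
    (∀ v ∈ V, empLag r γ f α D D0 vw w ≤ empLag r γ f α D D0 v w) →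
      empLag r γ f α D D0 vw w ≤ empLag r γ f α D D0 vhat what

/-- Weight of a transition tuple `((s,a),s')` under `(s,a) ∼ d^D`, `s' ∼ P(·|s,a)`. -/
noncomputable def tupleWeight (P : S → A → S → ℝ) (dD : S → A → ℝ)
    (x : (S × A) × S) : ℝ :=
  dD x.1.1 x.1.2 * P x.1.1 x.1.2 x.2

/-- The joint law of the transition dataset `D` (i.i.d. from `d^D ⊗ P`) and the
initial-state dataset `D0` (i.i.d. from `μ0`). -/
noncomputable def dataMeasure [MeasurableSpace S] [MeasurableSpace A]
    (P : S → A → S → ℝ) (dD : S → A → ℝ) (μ0 : S → ℝ) (n n0 : ℕ) :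
    Measure ((Fin n → (S × A) × S) × (Fin n0 → S)) :=
  (Measure.pi fun _ : Fin n => discMeasure (tupleWeight P dD)).prod
    (Measure.pi fun _ : Fin n0 => discMeasure μ0)

/-- The joint law of datasets `D1`, `D2` (both i.i.d. from `d^D ⊗ P`) and `D0`
(i.i.d. from `μ0`), used by PRO-RL-BC. -/
noncomputable def dataMeasure3 [MeasurableSpace S] [MeasurableSpace A]
    (P : S → A → S → ℝ) (dD : S → A → ℝ) (μ0 : S → ℝ) (n1 n2 n0 : ℕ) :
    Measure ((Fin n1 → (S × A) × S) × (Fin n2 → (S × A) × S) × (Fin n0 → S)) :=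
  (Measure.pi fun _ : Fin n1 => discMeasure (tupleWeight P dD)).prod
    ((Measure.pi fun _ : Fin n2 => discMeasure (tupleWeight P dD)).prod
      (Measure.pi fun _ : Fin n0 => discMeasure μ0))

/-- `v` is the optimal value function: it satisfies the Bellman optimality equation. -/
def IsOptValue [Nonempty A] (P : S → A → S → ℝ) (r : S → A → ℝ) (γ : ℝ)
    (v : S → ℝ) : Prop :=
  ∀ s : S, v s = Finset.univ.sup' Finset.univ_nonempty
    (fun a : A => r s a + γ * ∑ s' : S, P s a s' * v s')

/-- Basic assumptions on the MDP, the regularizer-free data, and the data distribution. -/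
structure MDPAssumptions (P : S → A → S → ℝ) (r : S → A → ℝ) (μ0 : S → ℝ) (γ : ℝ)
    (dD : S → A → ℝ) : Prop where
  P_nonneg : ∀ s a s', 0 ≤ P s a s'
  P_sum : ∀ s a, ∑ s' : S, P s a s' = 1
  r_nonneg : ∀ s a, 0 ≤ r s a
  r_le_one : ∀ s a, r s a ≤ 1
  γ_nonneg : 0 ≤ γ
  γ_lt_one : γ < 1
  μ0_pos : ∀ s, 0 < μ0 s
  μ0_sum : ∑ s : S, μ0 s = 1
  dD_nonneg : ∀ s a, 0 ≤ dD s a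
  dD_sum : ∑ s : S, ∑ a : A, dD s a = 1

/-- Regularity of the regularizer `f`: continuously differentiable with derivative `f'`,
`M_f`-strongly convex, and with `|f'| ≤ Bf'`, `|f| ≤ Bf` on `[0, Bw]`. -/
structure RegAssumptions (f f' : ℝ → ℝ) (Mf Bw Bf' Bf : ℝ) : Prop where
  deriv : ∀ x, HasDerivAt f (f' x) x
  strong : StrongConvexOn Set.univ Mf f
  Mf_pos : 0 < Mf
  f'_bdd : ∀ x, 0 ≤ x → x ≤ Bw → |f' x| ≤ Bf'
  f_bdd : ∀ x, 0 ≤ x → x ≤ Bw → |f x| ≤ Bf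

/-- `w` is an optimal density ratio of the unregularized LP (the set `W*₀`). -/
def OptRatio (P : S → A → S → ℝ) (r : S → A → ℝ) (μ0 : S → ℝ) (γ : ℝ)
    (dD : S → A → ℝ) (w : S → A → ℝ) : Prop :=
  (∀ s a, 0 ≤ w s a) ∧ BellmanFlow P μ0 γ (dstar dD w) ∧
  ∀ w' : S → A → ℝ, (∀ s a, 0 ≤ w' s a) → BellmanFlow P μ0 γ (dstar dD w') →
    ∑ s : S, ∑ a : A, dstar dD w' s a * r s a
      ≤ ∑ s : S, ∑ a : A, dstar dD w s a * r s a

/-! Strong convexity of `f` makes the Lagrangian at the optimal multiplier `v*` fall off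
quadratically, in `L²(d^D)`, around its constrained maximizer `w*`. By Hoeffding's inequality and a
union bound, the empirical Lagrangian is uniformly close to `L_α` on `V × W`, so `ŵ` nearly
maximizes `L_α(v*, ·)`, and hence is close to `w*` in `L²(d^D)`, a fortiori in `L¹(d^D)`.

The extracted policy `π̂` is the action conditional of `ŵ d^D`, while `w* d^D` and `d^π̂` are both
Bellman flows. State marginals of Bellman flows are `γ` times closer than the flows themselves,
whence `‖w* d^D - d^π̂‖₁ ≤ 2 / (1 - γ) * ‖(w* - ŵ) d^D‖₁` and `π̂` nearly earns the return of
`w* d^D`. Coverage makes `d*₀ / d^D` feasible in the regularized problem, so the latter return is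
within `2 α B_f` of the return of `π*₀`. With `α = ε / (4 B_f)` this bias is `ε / 2`, and the
sample sizes make the estimation error at most `ε / 2`. -/

section Concentration

variable {X Y : Type*} [MeasurableSpace X] [MeasurableSpace Y] {μ : Measure X} {ν : Measure Y}
  {g : X → ℝ} {B : ℝ} {m : ℕ}

/-- The deviation of the empirical mean of `g` over a sample `ω` from its mean under `μ`. -/
noncomputable def empDev (μ : Measure X) (g : X → ℝ) (ω : Fin m → X) : ℝ :=
  (m : ℝ)⁻¹ * ∑ i, g (ω i) - ∫ x, g x ∂μ

lemma empDev_neg (ω : Fin m → X) : empDev μ (-g) ω = -empDev μ g ω := by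
  simp only [empDev, Pi.neg_apply, Finset.sum_neg_distrib, mul_neg, integral_neg, neg_sub]
  ring

variable [IsProbabilityMeasure μ] [IsProbabilityMeasure ν]

lemma measureReal_pi_le_empDev_le (hg : Measurable g) (hgB : ∀ x, |g x| ≤ B) (hm : 0 < m) {t : ℝ}
    (ht : 0 ≤ t) :
    (Measure.pi fun _ : Fin m => μ).real {ω | t ≤ empDev μ g ω}
      ≤ Real.exp (-(m * t ^ 2 / (2 * B ^ 2))) := by
  have hm' : (0 : ℝ) < m := Nat.cast_pos.mpr hm
  have hind : ProbabilityTheory.iIndepFun (fun (i : Fin m) (ω : Fin m → X) => g (ω i) - ∫ x, g x ∂μ)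
      (Measure.pi fun _ => μ) :=
    ProbabilityTheory.iIndepFun_pi (X := fun _ x => g x - ∫ x, g x ∂μ)
      fun _ => (hg.sub_const _).aemeasurable
  have hsub : ∀ i ∈ (Finset.univ : Finset (Fin m)), ProbabilityTheory.HasSubgaussianMGF
      (fun ω : Fin m → X => g (ω i) - ∫ x, g x ∂μ) ((‖B - -B‖₊ / 2) ^ 2)
      (Measure.pi fun _ => μ) := by
    intro i _
    have h := ProbabilityTheory.hasSubgaussianMGF_of_mem_Icc
      (μ := Measure.pi fun _ : Fin m => μ) (X := fun ω => g (ω i))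
      (hg.comp (measurable_pi_apply i)).aemeasurable
      (ae_of_all _ fun ω => abs_le.mp (hgB (ω i)))
    rwa [integral_comp_eval (μ := fun _ : Fin m => μ) hg.aestronglyMeasurable] at h
  convert ProbabilityTheory.HasSubgaussianMGF.measure_sum_ge_le_of_iIndepFun hind hsub
    (mul_nonneg hm'.le ht) using 2
  · ext ω
    simp only [empDev, Set.mem_ofPred_eq, Finset.sum_sub_distrib, Finset.sum_const,
      Finset.card_univ, Fintype.card_fin, nsmul_eq_mul]
    rw [← mul_le_mul_iff_right₀ hm', mul_sub, mul_inv_cancel_left₀ hm'.ne']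
  · have hrange : (‖B - -B‖ / 2) ^ 2 = B ^ 2 := by
      rw [sub_neg_eq_add, ← two_mul, norm_mul, Real.norm_two, mul_div_cancel_left₀ _ two_ne_zero,
        Real.norm_eq_abs, sq_abs]
    push_cast
    simp only [hrange, Finset.sum_const, Finset.card_univ, Fintype.card_fin,
      nsmul_eq_mul]
    field_simp

lemma measureReal_pi_lt_abs_empDev_le (hg : Measurable g) (hgB : ∀ x, |g x| ≤ B) (hm : 0 < m)
    {t : ℝ} (ht : 0 ≤ t) :
    (Measure.pi fun _ : Fin m => μ).real {ω | t < |empDev μ g ω|}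
      ≤ 2 * Real.exp (-(m * t ^ 2 / (2 * B ^ 2))) := by
  have hneg := measureReal_pi_le_empDev_le (μ := μ) hg.neg
    (fun x => by rw [Pi.neg_apply, abs_neg]; exact hgB x) hm ht
  calc (Measure.pi fun _ : Fin m => μ).real {ω | t < |empDev μ g ω|}
      ≤ (Measure.pi fun _ : Fin m => μ).real
          ({ω | t ≤ empDev μ g ω} ∪ {ω | t ≤ empDev μ (-g) ω}) := by
        refine measureReal_mono fun ω hω => ?_
        rcases lt_abs.mp (Set.mem_ofPred_eq ▸ hω) with h | h
        · exact Or.inl h.le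
        · exact Or.inr (h.le.trans_eq (empDev_neg ω).symm)
    _ ≤ _ := measureReal_union_le _ _
    _ ≤ _ := (add_le_add (measureReal_pi_le_empDev_le hg hgB hm ht) hneg).trans_eq
        (two_mul _).symm

lemma measureReal_pi_mul_sqrt_log_lt_abs_empDev_le (hg : Measurable g) (hB : 0 ≤ B)
    (hgB : ∀ x, |g x| ≤ B) (hm : 0 < m) {η : ℝ} (hη : 0 < η) :
    (Measure.pi fun _ : Fin m => μ).real
        {ω | B * √(2 * Real.log (2 / η) / m) < |empDev μ g ω|} ≤ η := by
  rcases le_or_gt 1 η with hη1 | hη1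
  · exact measureReal_le_one.trans hη1
  rcases hB.eq_or_lt with rfl | hB
  · have hg0 : ∀ x, g x = 0 := fun x => abs_nonpos_iff.mp (hgB x)
    simpa [empDev, hg0] using hη.le
  have hm0 : (m : ℝ) ≠ 0 := Nat.cast_ne_zero.mpr hm.ne'
  have hlog : 0 ≤ Real.log (2 / η) :=
    Real.log_nonneg ((one_le_div hη).mpr (hη1.le.trans one_le_two))
  have hexponent : m * (B * √(2 * Real.log (2 / η) / m)) ^ 2 / (2 * B ^ 2) = Real.log (2 / η) := by
    rw [mul_pow, Real.sq_sqrt (by positivity)]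
    field_simp
  refine (measureReal_pi_lt_abs_empDev_le hg hgB hm (by positivity)).trans_eq ?_
  rw [hexponent, Real.exp_neg, Real.exp_log (by positivity), inv_div, mul_div_cancel₀ _ two_ne_zero]

lemma measureReal_pi_exists_mul_sqrt_log_lt_abs_empDev_le {ι : Type*} {g : ι → X → ℝ}
    (F : Finset ι) (hg : ∀ i ∈ F, Measurable (g i)) (hB : 0 ≤ B) (hgB : ∀ i ∈ F, ∀ x, |g i x| ≤ B)
    (hm : 0 < m) {δ : ℝ} (hδ : 0 < δ) :
    (Measure.pi fun _ : Fin m => μ).real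
        {ω | ∃ i ∈ F, B * √(2 * Real.log (2 * F.card / δ) / m) < |empDev μ (g i) ω|} ≤ δ := by
  have hunion : {ω : Fin m → X |
      ∃ i ∈ F, B * √(2 * Real.log (2 * F.card / δ) / m) < |empDev μ (g i) ω|} =
      ⋃ i ∈ F, {ω | B * √(2 * Real.log (2 / (δ / F.card)) / m) < |empDev μ (g i) ω|} := by
    ext ω
    simp only [div_div_eq_mul_div, Set.mem_iUnion, Set.mem_ofPred_eq, exists_prop]
  have hbound : ∀ i ∈ F, (Measure.pi fun _ : Fin m => μ).real
      {ω | B * √(2 * Real.log (2 / (δ / F.card)) / m) < |empDev μ (g i) ω|} ≤ δ / F.card := by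
    intro i hi
    have hcard : (0 : ℝ) < F.card := Nat.cast_pos.mpr (Finset.card_pos.mpr ⟨i, hi⟩)
    exact measureReal_pi_mul_sqrt_log_lt_abs_empDev_le (hg i hi) hB (hgB i hi) hm
      (div_pos hδ hcard)
  rw [hunion]
  calc _ ≤ _ := measureReal_biUnion_finset_le _ _
    _ ≤ ∑ _i ∈ F, δ / F.card := Finset.sum_le_sum hbound
    _ = F.card * (δ / F.card) := by rw [Finset.sum_const, nsmul_eq_mul]
    _ = δ * (F.card / F.card) := mul_div_left_comm _ _ _
    _ ≤ δ := mul_le_of_le_one_right hδ.le (div_self_le_one _)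

lemma measureReal_prod_fst_mem_or_snd_mem_le (s : Set X) (t : Set Y) :
    (μ.prod ν).real {ω | ω.1 ∈ s ∨ ω.2 ∈ t} ≤ μ.real s + ν.real t := by
  have hset : {ω : X × Y | ω.1 ∈ s ∨ ω.2 ∈ t} = s ×ˢ Set.univ ∪ Set.univ ×ˢ t := by
    ext ω
    simp
  rw [hset]
  refine (measureReal_union_le _ _).trans_eq ?_
  rw [measureReal_prod_prod, measureReal_prod_prod, probReal_univ, probReal_univ, mul_one, one_mul]

lemma one_sub_ofReal_le_measure {s : Set X} {δ : ℝ} (h : μ.real sᶜ ≤ δ) :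
    1 - ENNReal.ofReal δ ≤ μ s := by
  rw [tsub_le_iff_right, ← measure_univ (μ := μ)]
  calc μ Set.univ ≤ μ s + μ sᶜ := by
        rw [← Set.union_compl_self s]
        exact measure_union_le _ _
    _ ≤ μ s + ENNReal.ofReal δ := by
        rw [← ofReal_measureReal (μ := μ) (s := sᶜ)]
        gcongr

end Concentration

section DiscMeasure

variable {X : Type*} [Fintype X] [MeasurableSpace X] {p : X → ℝ}

lemma isProbabilityMeasure_discMeasure (hp : p ∈ stdSimplex ℝ X) :
    IsProbabilityMeasure (discMeasure p) := by
  constructor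
  rw [discMeasure, Measure.sum_apply _ MeasurableSet.univ]
  simp only [Measure.smul_apply, measure_univ, smul_eq_mul, mul_one]
  rw [tsum_fintype, ← ENNReal.ofReal_sum_of_nonneg fun x _ => hp.1 x, hp.2, ENNReal.ofReal_one]

lemma integral_discMeasure [MeasurableSingletonClass X] (hp : ∀ x, 0 ≤ p x) (g : X → ℝ) :
    ∫ x, g x ∂(discMeasure p) = ∑ x, p x * g x := by
  rw [discMeasure, Measure.sum_fintype, integral_finsetSum_measure]
  · simp only [integral_smul_measure, integral_dirac, ENNReal.toReal_ofReal (hp _), smul_eq_mul]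
  · exact fun x _ => (integrable_dirac (by simp)).smul_measure ENNReal.ofReal_ne_top

end DiscMeasure

section WeightedAverage

variable {ι : Type*} [Fintype ι]

lemma abs_sum_mul_le_of_mem_stdSimplex {p x : ι → ℝ} {B : ℝ} (hp : p ∈ stdSimplex ℝ ι)
    (hx : ∀ i, |x i| ≤ B) : |∑ i, p i * x i| ≤ B :=
  abs_le.mpr <| (convex_Icc (-B) B).sum_mem (fun i _ => hp.1 i) hp.2 fun i _ => abs_le.mp (hx i)

lemma uncurry_mem_stdSimplex_iff {d : S → A → ℝ} :
    Function.uncurry d ∈ stdSimplex ℝ (S × A) ↔ (∀ s a, 0 ≤ d s a) ∧ ∑ s, ∑ a, d s a = 1 := by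
  simp only [stdSimplex, Set.mem_ofPred_eq, Prod.forall, Function.uncurry_apply_pair,
    Fintype.sum_prod_type]

lemma sum_mul_abs_le_l2nrm {d : S → A → ℝ} (hd : Function.uncurry d ∈ stdSimplex ℝ (S × A))
    (g : S → A → ℝ) : ∑ s, ∑ a, d s a * |g s a| ≤ l2nrm d g := by
  refine Real.le_sqrt_of_sq_le ?_
  have hjensen := Real.pow_arith_mean_le_arith_mean_pow_of_even Finset.univ (Function.uncurry d)
    (fun x => |g x.1 x.2|) (fun x _ => hd.1 x) hd.2 even_two
  simpa only [Fintype.sum_prod_type, Function.uncurry_apply_pair, sq_abs] using hjensen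

end WeightedAverage

section Occupancy

/-- `π` is the conditional distribution of the action given the state under the (unnormalized)
state-action measure `d`; stated without division, so nothing is asked of `π` at null states. -/
def IsConditional {S A : Type*} [Fintype A] (π d : S → A → ℝ) : Prop :=
  ∀ s a, d s a = (∑ a', d s a') * π s a

variable {P : S → A → S → ℝ} {μ0 : S → ℝ} {γ : ℝ} {π d d' dhat : S → A → ℝ}

lemma isConditional_saDist (hπ : ∀ s, ∑ a, π s a = 1) (t : ℕ) :
    IsConditional π (saDist P μ0 π t) := by
  intro s a
  cases t <;> simp only [saDist, ← Finset.mul_sum, hπ, mul_one]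

lemma sum_saDist_succ (hπ : ∀ s, ∑ a, π s a = 1) (t : ℕ) (s : S) :
    ∑ a, saDist P μ0 π (t + 1) s a = ∑ s', ∑ a', saDist P μ0 π t s' a' * P s' a' s := by
  simp only [saDist, ← Finset.mul_sum, hπ, mul_one]

lemma saDist_mem_stdSimplex (hP : ∀ s a, P s a ∈ stdSimplex ℝ S) (hμ0 : μ0 ∈ stdSimplex ℝ S)
    (hπ : IsPolicy π) (t : ℕ) : Function.uncurry (saDist P μ0 π t) ∈ stdSimplex ℝ (S × A) := by
  induction t with
  | zero =>
    refine uncurry_mem_stdSimplex_iff.mpr ⟨fun s a => mul_nonneg (hμ0.1 s) (hπ.1 s a), ?_⟩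
    simp only [saDist, ← Finset.mul_sum, hπ.2, mul_one, hμ0.2]
  | succ t ih =>
    obtain ⟨hnonneg, hsum⟩ := uncurry_mem_stdSimplex_iff.mp ih
    refine uncurry_mem_stdSimplex_iff.mpr ⟨fun s a => mul_nonneg (Finset.sum_nonneg fun s' _ =>
      Finset.sum_nonneg fun a' _ => mul_nonneg (hnonneg s' a') ((hP s' a').1 s)) (hπ.1 s a), ?_⟩
    calc ∑ s, ∑ a, saDist P μ0 π (t + 1) s a
        = ∑ s', ∑ a', ∑ s, saDist P μ0 π t s' a' * P s' a' s := by
          simp only [sum_saDist_succ hπ.2]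
          rw [Finset.sum_comm]
          exact Finset.sum_congr rfl fun s' _ => Finset.sum_comm
      _ = 1 := by simp only [← Finset.mul_sum, (hP _ _).2, mul_one, hsum]

lemma summable_pow_mul_saDist (hP : ∀ s a, P s a ∈ stdSimplex ℝ S) (hμ0 : μ0 ∈ stdSimplex ℝ S)
    (hγ0 : 0 ≤ γ) (hγ1 : γ < 1) (hπ : IsPolicy π) (s : S) (a : A) :
    Summable fun t : ℕ => γ ^ t * saDist P μ0 π t s a := by
  have hmem (t : ℕ) : saDist P μ0 π t s a ∈ Set.Icc 0 1 :=
    mem_Icc_of_mem_stdSimplex (saDist_mem_stdSimplex hP hμ0 hπ t) (s, a)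
  exact Summable.of_nonneg_of_le (fun t => mul_nonneg (pow_nonneg hγ0 t) (hmem t).1)
    (fun t => mul_le_of_le_one_right (pow_nonneg hγ0 t) (hmem t).2)
    (summable_geometric_of_lt_one hγ0 hγ1)

lemma occ_nonneg (hP : ∀ s a, P s a ∈ stdSimplex ℝ S) (hμ0 : μ0 ∈ stdSimplex ℝ S)
    (hγ0 : 0 ≤ γ) (hγ1 : γ < 1) (hπ : IsPolicy π) (s : S) (a : A) : 0 ≤ occ P μ0 γ π s a :=
  mul_nonneg (sub_nonneg.mpr hγ1.le) <| tsum_nonneg fun t =>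
    mul_nonneg (pow_nonneg hγ0 t) ((saDist_mem_stdSimplex hP hμ0 hπ t).1 (s, a))

lemma sum_occ_eq_tsum (hP : ∀ s a, P s a ∈ stdSimplex ℝ S) (hμ0 : μ0 ∈ stdSimplex ℝ S)
    (hγ0 : 0 ≤ γ) (hγ1 : γ < 1) (hπ : IsPolicy π) (s : S) :
    ∑ a, occ P μ0 γ π s a = (1 - γ) * ∑' t : ℕ, γ ^ t * ∑ a, saDist P μ0 π t s a := by
  simp only [occ, Finset.mul_sum]
  rw [← Finset.mul_sum, Summable.tsum_finsetSum fun a _ =>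
    summable_pow_mul_saDist hP hμ0 hγ0 hγ1 hπ s a]

lemma isConditional_occ (hP : ∀ s a, P s a ∈ stdSimplex ℝ S) (hμ0 : μ0 ∈ stdSimplex ℝ S)
    (hγ0 : 0 ≤ γ) (hγ1 : γ < 1) (hπ : IsPolicy π) : IsConditional π (occ P μ0 γ π) := by
  intro s a
  rw [sum_occ_eq_tsum hP hμ0 hγ0 hγ1 hπ, occ, mul_assoc, ← tsum_mul_right]
  congr! 3 with t
  rw [mul_assoc, ← isConditional_saDist hπ.2 t s a]

lemma bellmanFlow_occ (hP : ∀ s a, P s a ∈ stdSimplex ℝ S) (hμ0 : μ0 ∈ stdSimplex ℝ S)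
    (hγ0 : 0 ≤ γ) (hγ1 : γ < 1) (hπ : IsPolicy π) : BellmanFlow P μ0 γ (occ P μ0 γ π) := by
  intro s
  have hsummable := summable_pow_mul_saDist hP hμ0 hγ0 hγ1 hπ
  have hmarginal : Summable fun t : ℕ => γ ^ t * ∑ a, saDist P μ0 π t s a := by
    simp only [Finset.mul_sum]
    exact summable_sum fun a _ => hsummable s a
  have hzero : ∑ a, saDist P μ0 π 0 s a = μ0 s := by
    simp only [saDist, ← Finset.mul_sum, hπ.2, mul_one]
  have hshift : ∑' t : ℕ, γ ^ (t + 1) * ∑ a, saDist P μ0 π (t + 1) s a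
      = γ * ∑ s', ∑ a', P s' a' s * ∑' t : ℕ, γ ^ t * saDist P μ0 π t s' a' := by
    have hterm (s' : S) (a' : A) := (hsummable s' a').mul_left (P s' a' s)
    simp only [← tsum_mul_left (a := P _ _ _)]
    simp only [← Summable.tsum_finsetSum fun a' _ => hterm _ a']
    rw [← Summable.tsum_finsetSum fun s' _ => summable_sum fun a' _ => hterm s' a',
      ← tsum_mul_left]
    congr! 2 with t
    simp only [sum_saDist_succ hπ.2, Finset.mul_sum]
    congr! 2 with s' _ a' _
    ring
  rw [sum_occ_eq_tsum hP hμ0 hγ0 hγ1 hπ, hmarginal.tsum_eq_zero_add, hzero, hshift]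
  simp only [occ, Finset.mul_sum, mul_add, pow_zero, one_mul]
  congr! 3 with s' _ a' _
  ring

lemma IsConditional.sum_abs_sub {S A : Type*} [Fintype A] {π d d' : S → A → ℝ}
    (hπ : IsPolicy π) (hd : IsConditional π d) (hd' : IsConditional π d') (s : S) :
    ∑ a, |d s a - d' s a| = |∑ a, d s a - ∑ a, d' s a| := by
  calc ∑ a, |d s a - d' s a| = ∑ a, |∑ a, d s a - ∑ a, d' s a| * π s a := by
        congr! 1 with a
        rw [hd s a, hd' s a, ← sub_mul, abs_mul, abs_of_nonneg (hπ.1 s a)]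
    _ = _ := by rw [← Finset.mul_sum, hπ.2, mul_one]

lemma BellmanFlow.sum_abs_marginal_sub_le (hP : ∀ s a, P s a ∈ stdSimplex ℝ S) (hγ0 : 0 ≤ γ)
    (hd : BellmanFlow P μ0 γ d) (hd' : BellmanFlow P μ0 γ d') :
    ∑ s, |∑ a, d s a - ∑ a, d' s a| ≤ γ * ∑ s, ∑ a, |d s a - d' s a| := by
  have hmarginal (s : S) : |∑ a, d s a - ∑ a, d' s a|
      ≤ γ * ∑ s', ∑ a', P s' a' s * |d s' a' - d' s' a'| := by
    rw [hd s, hd' s, add_sub_add_left_eq_sub, ← mul_sub, abs_mul, abs_of_nonneg hγ0]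
    refine mul_le_mul_of_nonneg_left ?_ hγ0
    simp only [← Finset.sum_sub_distrib, ← mul_sub]
    refine (Finset.abs_sum_le_sum_abs _ _).trans <| Finset.sum_le_sum fun s' _ =>
      (Finset.abs_sum_le_sum_abs _ _).trans_eq <| Finset.sum_congr rfl fun a' _ => ?_
    rw [abs_mul, abs_of_nonneg ((hP s' a').1 s)]
  calc ∑ s, |∑ a, d s a - ∑ a, d' s a|
      ≤ γ * ∑ s', ∑ a', ∑ s, P s' a' s * |d s' a' - d' s' a'| := by
        refine (Finset.sum_le_sum fun s _ => hmarginal s).trans_eq ?_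
        rw [← Finset.mul_sum, Finset.sum_comm]
        exact congrArg (γ * ·) <| Finset.sum_congr rfl fun s' _ => Finset.sum_comm
    _ = _ := by simp only [← Finset.sum_mul, (hP _ _).2, one_mul]

/-- The state marginals of two Bellman flows are `γ` times closer than the flows themselves, and
`dhat` differs from `d'` only through its state marginal. -/
lemma BellmanFlow.sum_abs_sub_le (hP : ∀ s a, P s a ∈ stdSimplex ℝ S) (hγ0 : 0 ≤ γ)
    (hπ : IsPolicy π) (hd : BellmanFlow P μ0 γ d) (hd' : BellmanFlow P μ0 γ d')
    (hcond' : IsConditional π d') (hcond : IsConditional π dhat) :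
    (1 - γ) * ∑ s, ∑ a, |d s a - d' s a| ≤ 2 * ∑ s, ∑ a, |d s a - dhat s a| := by
  have htri : ∑ s, ∑ a, |d s a - d' s a|
      ≤ ∑ s, ∑ a, |d s a - dhat s a| + ∑ s, ∑ a, |dhat s a - d' s a| := by
    simp only [← Finset.sum_add_distrib]
    exact Finset.sum_le_sum fun s _ => Finset.sum_le_sum fun a _ => abs_sub_le _ _ _
  have hhat : ∑ s, ∑ a, |dhat s a - d' s a|
      ≤ ∑ s, ∑ a, |d s a - dhat s a| + ∑ s, |∑ a, d s a - ∑ a, d' s a| := by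
    rw [← Finset.sum_add_distrib]
    refine Finset.sum_le_sum fun s _ => ?_
    rw [hcond.sum_abs_sub hπ hcond']
    refine (abs_sub_le _ (∑ a, d s a) _).trans (add_le_add_left ?_ _)
    rw [abs_sub_comm, ← Finset.sum_sub_distrib]
    exact Finset.abs_sum_le_sum_abs _ _
  have hcontr := hd.sum_abs_marginal_sub_le hP hγ0 hd'
  linarith

end Occupancy

section Extraction

variable {X Y : Type*} [Fintype Y] {d dD w : X → Y → ℝ}

lemma isPolicy_normPolicy [Nonempty Y] (hd : ∀ x y, 0 ≤ d x y) : IsPolicy (normPolicy d) := by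
  refine ⟨fun x y => ?_, fun x => ?_⟩ <;> unfold normPolicy <;> split_ifs with hpos
  · exact div_nonneg (hd x y) hpos.le
  · positivity
  · rw [← Finset.sum_div, div_self hpos.ne']
  · simp

lemma isConditional_normPolicy (hd : ∀ x y, 0 ≤ d x y) : IsConditional (normPolicy d) d := by
  intro x y
  unfold normPolicy
  split_ifs with hpos
  · rw [mul_div_cancel₀ _ hpos.ne']
  · have hzero : ∑ y, d x y = 0 := le_antisymm (not_lt.mp hpos) (Fintype.sum_nonneg (hd x))
    rw [hzero, zero_mul, congrFun ((Fintype.sum_eq_zero_iff_of_nonneg (hd x)).mp hzero) y,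
      Pi.zero_apply]

variable [Nonempty Y]

lemma isPolicy_extractPolicy (hdD : ∀ x y, 0 ≤ dD x y) (hw : ∀ x y, 0 ≤ w x y) :
    IsPolicy (extractPolicy (behPolicy dD) w) :=
  isPolicy_normPolicy fun x y => mul_nonneg (hw x y) ((isPolicy_normPolicy hdD).1 x y)

lemma isConditional_extractPolicy (hdD : ∀ x y, 0 ≤ dD x y) (hw : ∀ x y, 0 ≤ w x y) :
    IsConditional (extractPolicy (behPolicy dD) w) (dstar dD w) := by
  have hscale (x : X) (y : Y) : dstar dD w x y = (∑ y', dD x y') * (w x y * behPolicy dD x y) := by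
    rw [mul_left_comm, behPolicy, ← isConditional_normPolicy hdD x y, dstar]
  intro x y
  simp only [hscale, ← Finset.mul_sum]
  rw [mul_assoc]
  exact congrArg _ <| isConditional_normPolicy
    (fun x y => mul_nonneg (hw x y) ((isPolicy_normPolicy hdD).1 x y)) x y

lemma exists_dstar_eq {X Y : Type*} {d dD : X → Y → ℝ} {B : ℝ} (hdD : ∀ x y, 0 ≤ dD x y)
    (hB : 0 ≤ B) (hd : ∀ x y, 0 ≤ d x y) (hcov : ∀ x y, d x y ≤ B * dD x y) :
    ∃ w : X → Y → ℝ, (∀ x y, w x y ∈ Set.Icc 0 B) ∧ dstar dD w = d := by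
  refine ⟨fun x y => d x y / dD x y, fun x y => ⟨div_nonneg (hd x y) (hdD x y),
    div_le_of_le_mul₀ (hdD x y) hB (hcov x y)⟩, ?_⟩
  ext x y
  refine div_mul_cancel_of_imp fun hzero => le_antisymm ?_ (hd x y)
  simpa only [hzero, mul_zero] using hcov x y

end Extraction

section ExtractionError

variable {P : S → A → S → ℝ} {r : S → A → ℝ} {μ0 : S → ℝ} {γ : ℝ} {dD w what : S → A → ℝ}
  [Nonempty A]

lemma BellmanFlow.sum_mul_sub_Jret_extractPolicy_le (hP : ∀ s a, P s a ∈ stdSimplex ℝ S)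
    (hμ0 : μ0 ∈ stdSimplex ℝ S) (hγ0 : 0 ≤ γ) (hγ1 : γ < 1) (hr : ∀ s a, |r s a| ≤ 1)
    (hdD : ∀ s a, 0 ≤ dD s a) (hwhat : ∀ s a, 0 ≤ what s a)
    (hw : BellmanFlow P μ0 γ (dstar dD w)) :
    ∑ s, ∑ a, dstar dD w s a * r s a - Jret P r μ0 γ (extractPolicy (behPolicy dD) what)
      ≤ 2 / (1 - γ) * ∑ s, ∑ a, dD s a * |w s a - what s a| := by
  set πhat := extractPolicy (behPolicy dD) what
  have hπ : IsPolicy πhat := isPolicy_extractPolicy hdD hwhat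
  have hl1 := hw.sum_abs_sub_le hP hγ0 hπ (bellmanFlow_occ hP hμ0 hγ0 hγ1 hπ)
    (isConditional_occ hP hμ0 hγ0 hγ1 hπ) (isConditional_extractPolicy hdD hwhat)
  calc ∑ s, ∑ a, dstar dD w s a * r s a - Jret P r μ0 γ πhat
      = ∑ s, ∑ a, (dstar dD w s a - occ P μ0 γ πhat s a) * r s a := by
        simp only [Jret, ← Finset.sum_sub_distrib, ← sub_mul]
    _ ≤ ∑ s, ∑ a, |dstar dD w s a - occ P μ0 γ πhat s a| := by
        gcongr with s _ a _
        refine (le_abs_self _).trans ?_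
        rw [abs_mul]
        exact mul_le_of_le_one_right (abs_nonneg _) (hr s a)
    _ ≤ 2 / (1 - γ) * ∑ s, ∑ a, |dstar dD w s a - dstar dD what s a| := by
        rwa [div_mul_eq_mul_div, le_div_iff₀' (sub_pos.mpr hγ1)]
    _ = _ := by
        simp only [dstar, ← sub_mul, abs_mul, abs_of_nonneg (hdD _ _), mul_comm (dD _ _)]

end ExtractionError

section Lagrangian

variable {P : S → A → S → ℝ} {r : S → A → ℝ} {μ0 : S → ℝ} {γ : ℝ} {dD : S → A → ℝ}
  {f : ℝ → ℝ} {α Bw Mf Bf : ℝ}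

/-- The defect of `d` in the Bellman flow equation at the state `s`, that is, the gradient of the
Lagrangian in the multiplier `v s`. -/
noncomputable def flowResidual (P : S → A → S → ℝ) (μ0 : S → ℝ) (γ : ℝ) (d : S → A → ℝ)
    (s : S) : ℝ :=
  (1 - γ) * μ0 s + γ * ∑ s', ∑ a', P s' a' s * d s' a' - ∑ a, d s a

lemma bellmanFlow_iff_flowResidual_eq_zero {d : S → A → ℝ} :
    BellmanFlow P μ0 γ d ↔ flowResidual P μ0 γ d = 0 := by
  simp only [BellmanFlow, funext_iff, flowResidual, Pi.zero_apply, sub_eq_zero,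
    eq_comm (a := ∑ a, d _ a)]

lemma sum_mul_flowResidual (v : S → ℝ) (d : S → A → ℝ) :
    ∑ s, v s * flowResidual P μ0 γ d s = (1 - γ) * ∑ s, μ0 s * v s
      + ∑ s, ∑ a, d s a * (γ * ∑ s', P s a s' * v s' - v s) := by
  have hswap : ∑ s, v s * ∑ s', ∑ a', P s' a' s * d s' a'
      = ∑ s', ∑ a', d s' a' * ∑ s, P s' a' s * v s := by
    simp only [Finset.mul_sum]
    rw [Finset.sum_comm]
    refine Finset.sum_congr rfl fun s' _ => ?_
    rw [Finset.sum_comm]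
    exact Finset.sum_congr rfl fun a' _ => Finset.sum_congr rfl fun s _ => by ring
  have hpoint (s : S) : v s * flowResidual P μ0 γ d s = (1 - γ) * (μ0 s * v s)
      + γ * (v s * ∑ s', ∑ a', P s' a' s * d s' a') - ∑ a, d s a * v s := by
    rw [flowResidual, ← Finset.sum_mul]
    ring
  simp only [hpoint, Finset.sum_sub_distrib, Finset.sum_add_distrib, ← Finset.mul_sum, hswap,
    mul_sub, mul_left_comm _ γ, add_sub_assoc]

lemma Lag_eq_add_sum_mul_flowResidual (v : S → ℝ) (w : S → A → ℝ) :
    Lag P r μ0 γ dD f α v w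
      = ∑ s, ∑ a, dstar dD w s a * r s a - α * ∑ s, ∑ a, dD s a * f (w s a)
        + ∑ s, v s * flowResidual P μ0 γ (dstar dD w) s := by
  have hterm : ∑ s, ∑ a, dD s a * (w s a * eV P r γ v s a) = ∑ s, ∑ a, dstar dD w s a * r s a
      + ∑ s, ∑ a, dstar dD w s a * (γ * ∑ s', P s a s' * v s' - v s) := by
    simp only [← Finset.sum_add_distrib]
    exact Finset.sum_congr rfl fun s _ => Finset.sum_congr rfl fun a _ => by
      rw [eV, dstar]
      ring
  rw [sum_mul_flowResidual, Lag, hterm]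
  ring

lemma Lag_eq_add_sum (v : S → ℝ) (w : S → A → ℝ) :
    Lag P r μ0 γ dD f α v w = (1 - γ) * ∑ s, μ0 s * v s
      + ∑ s, ∑ a, dD s a * (w s a * eV P r γ v s a - α * f (w s a)) := by
  simp only [Lag, mul_sub, Finset.sum_sub_distrib, mul_left_comm _ α, ← Finset.mul_sum]
  ring

lemma Lag_of_bellmanFlow {w : S → A → ℝ} (hw : BellmanFlow P μ0 γ (dstar dD w)) (v : S → ℝ) :
    Lag P r μ0 γ dD f α v w
      = ∑ s, ∑ a, dstar dD w s a * r s a - α * ∑ s, ∑ a, dD s a * f (w s a) := by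
  simp only [Lag_eq_add_sum_mul_flowResidual, bellmanFlow_iff_flowResidual_eq_zero.mp hw,
    Pi.zero_apply, mul_zero, Finset.sum_const_zero, add_zero]

lemma IsSaddleB.bellmanFlow {v : S → ℝ} {w : S → A → ℝ}
    (h : IsSaddleB P r μ0 γ dD f α Bw v w) : BellmanFlow P μ0 γ (dstar dD w) := by
  have hstep := h.2.1 (v - flowResidual P μ0 γ (dstar dD w))
  simp only [Lag_eq_add_sum_mul_flowResidual, Pi.sub_apply, sub_mul, Finset.sum_sub_distrib]
    at hstep
  rw [bellmanFlow_iff_flowResidual_eq_zero]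
  ext s
  have hsq : ∑ s, flowResidual P μ0 γ (dstar dD w) s * flowResidual P μ0 γ (dstar dD w) s = 0 :=
    le_antisymm (by linarith) (Finset.sum_nonneg fun s _ => mul_self_nonneg _)
  exact mul_self_eq_zero.mp <| (Finset.sum_eq_zero_iff_of_nonneg fun s _ => mul_self_nonneg _).mp
    hsq s (Finset.mem_univ s)

lemma strongConvexOn_midpoint_le {E : Type*} [NormedAddCommGroup E] [NormedSpace ℝ E] {s : Set E}
    {m : ℝ} {g : E → ℝ} (hg : StrongConvexOn s m g) {x y : E} (hx : x ∈ s) (hy : y ∈ s) :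
    g (midpoint ℝ x y) ≤ (g x + g y) / 2 - m / 8 * ‖x - y‖ ^ 2 := by
  have h := hg.2 hx hy (inv_nonneg.mpr zero_le_two) (inv_nonneg.mpr zero_le_two)
    (by norm_num : (2⁻¹ : ℝ) + 2⁻¹ = 1)
  rw [midpoint_eq_smul_add, invOf_eq_inv, smul_add]
  refine h.trans_eq ?_
  simp only [smul_eq_mul]
  ring

lemma le_Lag_midpoint (hdD : ∀ s a, 0 ≤ dD s a) (hα : 0 ≤ α)
    (hf : StrongConvexOn (Set.Icc 0 Bw) Mf f) (v : S → ℝ) {w w' : S → A → ℝ}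
    (hw : ∀ s a, w s a ∈ Set.Icc 0 Bw) (hw' : ∀ s a, w' s a ∈ Set.Icc 0 Bw) :
    (Lag P r μ0 γ dD f α v w + Lag P r μ0 γ dD f α v w') / 2
        + α * Mf / 8 * ∑ s, ∑ a, dD s a * (w s a - w' s a) ^ 2
      ≤ Lag P r μ0 γ dD f α v fun s a => midpoint ℝ (w s a) (w' s a) := by
  have hpoint (s : S) (a : A) :
      (dD s a * (w s a * eV P r γ v s a - α * f (w s a))
          + dD s a * (w' s a * eV P r γ v s a - α * f (w' s a))) / 2
        + α * Mf / 8 * (dD s a * (w s a - w' s a) ^ 2)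
      ≤ dD s a * (midpoint ℝ (w s a) (w' s a) * eV P r γ v s a
          - α * f (midpoint ℝ (w s a) (w' s a))) := by
    have hmid := strongConvexOn_midpoint_le hf (hw s a) (hw' s a)
    have hscaled := mul_le_mul_of_nonneg_left hmid (mul_nonneg (hdD s a) hα)
    rw [Real.norm_eq_abs, sq_abs] at hscaled
    have hlin : midpoint ℝ (w s a) (w' s a) = (w s a + w' s a) / 2 := by
      rw [midpoint_eq_smul_add, invOf_eq_inv, smul_eq_mul, inv_mul_eq_div]
    rw [hlin] at hscaled ⊢
    linarith
  have hsum := Finset.sum_le_sum fun s (_ : s ∈ Finset.univ) =>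
    Finset.sum_le_sum fun a (_ : a ∈ Finset.univ) => hpoint s a
  simp only [Finset.sum_add_distrib, ← Finset.sum_div, ← Finset.mul_sum] at hsum
  simp only [Lag_eq_add_sum]
  linarith

lemma IsSaddleB.quadratic_growth (hdD : ∀ s a, 0 ≤ dD s a) (hα : 0 ≤ α)
    (hf : StrongConvexOn (Set.Icc 0 Bw) Mf f) {v : S → ℝ} {w w' : S → A → ℝ}
    (h : IsSaddleB P r μ0 γ dD f α Bw v w) (hw' : ∀ s a, w' s a ∈ Set.Icc 0 Bw) :
    α * Mf / 4 * ∑ s, ∑ a, dD s a * (w s a - w' s a) ^ 2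
      ≤ Lag P r μ0 γ dD f α v w - Lag P r μ0 γ dD f α v w' := by
  have hmid := (le_Lag_midpoint hdD hα hf v h.1 hw').trans
    (h.2.2 _ fun s a => (convex_Icc 0 Bw).midpoint_mem (h.1 s a) (hw' s a))
  linarith

lemma IsSaddleB.sum_mul_sub_le (hdD : Function.uncurry dD ∈ stdSimplex ℝ (S × A)) (hα : 0 ≤ α)
    (hfB : ∀ x ∈ Set.Icc 0 Bw, |f x| ≤ Bf) {v : S → ℝ} {w w' : S → A → ℝ}
    (h : IsSaddleB P r μ0 γ dD f α Bw v w) (hw' : ∀ s a, w' s a ∈ Set.Icc 0 Bw)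
    (hflow : BellmanFlow P μ0 γ (dstar dD w')) :
    ∑ s, ∑ a, dstar dD w' s a * r s a - ∑ s, ∑ a, dstar dD w s a * r s a ≤ 2 * α * Bf := by
  have hmax := h.2.2 w' hw'
  rw [Lag_of_bellmanFlow h.bellmanFlow, Lag_of_bellmanFlow hflow] at hmax
  have hreg {u : S → A → ℝ} (hu : ∀ s a, u s a ∈ Set.Icc 0 Bw) :
      |α * ∑ s, ∑ a, dD s a * f (u s a)| ≤ α * Bf := by
    have hmean := abs_sum_mul_le_of_mem_stdSimplex hdD fun x => hfB (u x.1 x.2) (hu x.1 x.2)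
    rw [Fintype.sum_prod_type] at hmean
    rw [abs_mul, abs_of_nonneg hα]
    exact mul_le_mul_of_nonneg_left hmean hα
  linarith [abs_le.mp (hreg hw'), abs_le.mp (hreg h.1)]

end Lagrangian

section Guarantee

variable {P : S → A → S → ℝ} {r : S → A → ℝ} {μ0 : S → ℝ} {γ : ℝ} {dD : S → A → ℝ}
  {f : ℝ → ℝ} {α Bw Mf Bf τ : ℝ} {V : Finset (S → ℝ)} {W : Finset (S → A → ℝ)} {n n0 : ℕ}
  {D : Fin n → (S × A) × S} {D0 : Fin n0 → S} {vhat vst : S → ℝ} {what wst : S → A → ℝ}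

lemma IsProRLOutput.Lag_sub_le (hout : IsProRLOutput r γ f α V W D D0 vhat what)
    (hsad : IsSaddleB P r μ0 γ dD f α Bw vst wst) (hvst : vst ∈ V) (hwst : wst ∈ W)
    (hdev : ∀ v ∈ V, ∀ w ∈ W,
      |empLag r γ f α D D0 v w - Lag P r μ0 γ dD f α v w| ≤ τ) :
    Lag P r μ0 γ dD f α vst wst - Lag P r μ0 γ dD f α vst what ≤ 2 * τ := by
  obtain ⟨-, hwhat, hmin, hmax⟩ := hout
  obtain ⟨vw, hvw, hvwmin⟩ :=
    Finset.exists_min_image V (fun v => empLag r γ f α D D0 v wst) ⟨vst, hvst⟩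
  have hpop := hsad.2.1 vw
  have hemp := (hmax wst hwst vw hvw hvwmin).trans (hmin vst hvst)
  have hdev_hat := (abs_le.mp (hdev vst hvst what hwhat)).2
  have hdev_st := (abs_le.mp (hdev vw hvw wst hwst)).1
  linarith

lemma IsProRLOutput.l2nrm_sub_le (hdD : ∀ s a, 0 ≤ dD s a) (hα : 0 < α) (hMf : 0 < Mf)
    (hf : StrongConvexOn (Set.Icc 0 Bw) Mf f)
    (hout : IsProRLOutput r γ f α V W D D0 vhat what)
    (hsad : IsSaddleB P r μ0 γ dD f α Bw vst wst) (hvst : vst ∈ V) (hwst : wst ∈ W)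
    (hW : ∀ w ∈ W, ∀ s a, w s a ∈ Set.Icc 0 Bw)
    (hdev : ∀ v ∈ V, ∀ w ∈ W,
      |empLag r γ f α D D0 v w - Lag P r μ0 γ dD f α v w| ≤ τ) :
    l2nrm dD (wst - what) ≤ √(8 * τ / (α * Mf)) := by
  have hgrowth := (hsad.quadratic_growth hdD hα.le hf (hW what hout.2.1)).trans
    (hout.Lag_sub_le hsad hvst hwst hdev)
  refine Real.sqrt_le_sqrt ?_
  rw [le_div_iff₀' (mul_pos hα hMf)]
  simp only [Pi.sub_apply]
  linarith

lemma IsProRLOutput.Jret_sub_le [Nonempty A] (hP : ∀ s a, P s a ∈ stdSimplex ℝ S)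
    (hμ0 : μ0 ∈ stdSimplex ℝ S) (hγ0 : 0 ≤ γ) (hγ1 : γ < 1) (hr : ∀ s a, |r s a| ≤ 1)
    (hdD : Function.uncurry dD ∈ stdSimplex ℝ (S × A)) (hα : 0 < α) (hMf : 0 < Mf) (hBw : 0 ≤ Bw)
    (hf : StrongConvexOn (Set.Icc 0 Bw) Mf f) (hfB : ∀ x ∈ Set.Icc 0 Bw, |f x| ≤ Bf)
    {π0 : S → A → ℝ} (hπ0 : IsPolicy π0) (hcov : ∀ s a, occ P μ0 γ π0 s a ≤ Bw * dD s a)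
    (hout : IsProRLOutput r γ f α V W D D0 vhat what)
    (hsad : IsSaddleB P r μ0 γ dD f α Bw vst wst) (hvst : vst ∈ V) (hwst : wst ∈ W)
    (hW : ∀ w ∈ W, ∀ s a, w s a ∈ Set.Icc 0 Bw)
    (hdev : ∀ v ∈ V, ∀ w ∈ W,
      |empLag r γ f α D D0 v w - Lag P r μ0 γ dD f α v w| ≤ τ) :
    Jret P r μ0 γ π0 - Jret P r μ0 γ (extractPolicy (behPolicy dD) what)
      ≤ 2 * α * Bf + 2 / (1 - γ) * √(8 * τ / (α * Mf)) := by
  have hdD0 := (uncurry_mem_stdSimplex_iff.mp hdD).1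
  obtain ⟨w0, hw0, hw0_occ⟩ :=
    exists_dstar_eq hdD0 hBw (occ_nonneg hP hμ0 hγ0 hγ1 hπ0) hcov
  have hbias := hsad.sum_mul_sub_le hdD hα.le hfB hw0
    (hw0_occ ▸ bellmanFlow_occ hP hμ0 hγ0 hγ1 hπ0)
  rw [hw0_occ, ← Jret] at hbias
  have hextract := hsad.bellmanFlow.sum_mul_sub_Jret_extractPolicy_le hP hμ0 hγ0 hγ1 hr hdD0
    fun s a => (hW what hout.2.1 s a).1
  have hl2 := (sum_mul_abs_le_l2nrm hdD (wst - what)).trans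
    (hout.l2nrm_sub_le hdD0 hα hMf hf hsad hvst hwst hW hdev)
  have hfactor : 0 ≤ 2 / (1 - γ) := div_nonneg zero_le_two (sub_nonneg.mpr hγ1.le)
  linarith [hextract.trans (mul_le_mul_of_nonneg_left hl2 hfactor)]

end Guarantee

section Empirical

variable {P : S → A → S → ℝ} {r : S → A → ℝ} {μ0 : S → ℝ} {γ : ℝ} {dD : S → A → ℝ}
  {f : ℝ → ℝ} {α Bw Bf Bv : ℝ}

/-- The contribution of one transition `((s, a), s')` to the empirical Lagrangian. -/
def tupleLag {S A : Type*} (r : S → A → ℝ) (γ : ℝ) (f : ℝ → ℝ) (α : ℝ) (v : S → ℝ)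
    (w : S → A → ℝ) (x : (S × A) × S) : ℝ :=
  w x.1.1 x.1.2 * (r x.1.1 x.1.2 + γ * v x.2 - v x.1.1) - α * f (w x.1.1 x.1.2)

lemma abs_tupleLag_le {S A : Type*} {r : S → A → ℝ} (hγ0 : 0 ≤ γ) (hr : ∀ s a, |r s a| ≤ 1)
    (hα : 0 ≤ α) (hBw : 0 ≤ Bw) (hfB : ∀ x ∈ Set.Icc 0 Bw, |f x| ≤ Bf) {v : S → ℝ}
    {w : S → A → ℝ} (hv : ∀ s, |v s| ≤ Bv) (hw : ∀ s a, w s a ∈ Set.Icc 0 Bw)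
    (x : (S × A) × S) :
    |tupleLag r γ f α v w x| ≤ α * Bf + Bw * ((1 + γ) * Bv + 1) := by
  obtain ⟨⟨s, a⟩, s'⟩ := x
  have hresidual : |r s a + γ * v s' - v s| ≤ (1 + γ) * Bv + 1 :=
    calc |r s a + γ * v s' - v s| ≤ |r s a| + |γ * v s'| + |v s| :=
          (abs_sub _ _).trans (add_le_add_left (abs_add_le _ _) _)
      _ ≤ 1 + γ * Bv + Bv := by
          rw [abs_mul, abs_of_nonneg hγ0]
          gcongr
          exacts [hr s a, hv s', hv s]
      _ = (1 + γ) * Bv + 1 := by ring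
  calc |tupleLag r γ f α v w ((s, a), s')|
      ≤ |α * f (w s a)| + |w s a * (r s a + γ * v s' - v s)| :=
        (abs_sub _ _).trans_eq (add_comm _ _)
    _ ≤ α * Bf + Bw * ((1 + γ) * Bv + 1) := by
        rw [abs_mul, abs_mul, abs_of_nonneg hα, abs_of_nonneg (hw s a).1]
        gcongr
        exacts [hfB _ (hw s a), (hw s a).2]

lemma tupleWeight_mem_stdSimplex (hP : ∀ s a, P s a ∈ stdSimplex ℝ S)
    (hdD : Function.uncurry dD ∈ stdSimplex ℝ (S × A)) :
    tupleWeight P dD ∈ stdSimplex ℝ ((S × A) × S) := by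
  refine ⟨fun x => mul_nonneg (hdD.1 x.1) ((hP _ _).1 x.2), ?_⟩
  simp only [tupleWeight, Fintype.sum_prod_type, ← Finset.mul_sum, (hP _ _).2, mul_one]
  exact (uncurry_mem_stdSimplex_iff.mp hdD).2

variable [MeasurableSpace S] [MeasurableSpace A] [MeasurableSingletonClass S]
  [MeasurableSingletonClass A]

lemma integral_tupleLag (hP : ∀ s a, P s a ∈ stdSimplex ℝ S)
    (hdD : Function.uncurry dD ∈ stdSimplex ℝ (S × A)) (v : S → ℝ) (w : S → A → ℝ) :
    ∫ x, tupleLag r γ f α v w x ∂(discMeasure (tupleWeight P dD))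
      = ∑ s, ∑ a, dD s a * (w s a * eV P r γ v s a - α * f (w s a)) := by
  have hsplit (s : S) (a : A) (s' : S) :
      dD s a * P s a s' * (w s a * (r s a + γ * v s' - v s) - α * f (w s a))
        = dD s a * (w s a * (r s a - v s) - α * f (w s a)) * P s a s'
          + dD s a * w s a * γ * (P s a s' * v s') := by ring
  rw [integral_discMeasure (tupleWeight_mem_stdSimplex hP hdD).1]
  simp only [Fintype.sum_prod_type, tupleWeight, tupleLag, hsplit, Finset.sum_add_distrib,
    ← Finset.mul_sum, (hP _ _).2, eV]
  simp only [← Finset.sum_add_distrib]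
  refine Finset.sum_congr rfl fun s _ => Finset.sum_congr rfl fun a _ => ?_
  ring

lemma empLag_sub_Lag (hP : ∀ s a, P s a ∈ stdSimplex ℝ S) (hμ0 : ∀ s, 0 ≤ μ0 s)
    (hdD : Function.uncurry dD ∈ stdSimplex ℝ (S × A)) {n n0 : ℕ} (D : Fin n → (S × A) × S)
    (D0 : Fin n0 → S) (v : S → ℝ) (w : S → A → ℝ) :
    empLag r γ f α D D0 v w - Lag P r μ0 γ dD f α v w
      = (1 - γ) * empDev (discMeasure μ0) v D0
        + empDev (discMeasure (tupleWeight P dD)) (tupleLag r γ f α v w) D := by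
  rw [Lag_eq_add_sum, empDev, empDev, integral_discMeasure hμ0, integral_tupleLag hP hdD]
  simp only [empLag, tupleLag, Finset.sum_sub_distrib, ← Finset.mul_sum]
  ring

lemma one_sub_ofReal_le_dataMeasure_abs_empLag_sub_Lag_le
    (hP : ∀ s a, P s a ∈ stdSimplex ℝ S) (hμ0 : μ0 ∈ stdSimplex ℝ S)
    (hdD : Function.uncurry dD ∈ stdSimplex ℝ (S × A)) (hγ0 : 0 ≤ γ) (hγ1 : γ < 1)
    (hr : ∀ s a, |r s a| ≤ 1) (hα : 0 ≤ α) (hBw : 0 ≤ Bw) (hBv : 0 ≤ Bv)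
    (hfB : ∀ x ∈ Set.Icc 0 Bw, |f x| ≤ Bf) {V : Finset (S → ℝ)} {W : Finset (S → A → ℝ)}
    (hV : ∀ v ∈ V, ∀ s, |v s| ≤ Bv) (hW : ∀ w ∈ W, ∀ s a, w s a ∈ Set.Icc 0 Bw)
    {n n0 : ℕ} (hn : 0 < n) (hn0 : 0 < n0) {δ : ℝ} (hδ : 0 < δ) :
    1 - ENNReal.ofReal δ ≤ dataMeasure P dD μ0 n n0 {ω | ∀ v ∈ V, ∀ w ∈ W,
      |empLag r γ f α ω.1 ω.2 v w - Lag P r μ0 γ dD f α v w|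
        ≤ epsStat γ α Bv Bf Bw ((1 + γ) * Bv + 1) δ V.card W.card n n0} := by
  have hBf : 0 ≤ Bf := (abs_nonneg _).trans (hfB 0 (Set.left_mem_Icc.mpr hBw))
  have := isProbabilityMeasure_discMeasure (tupleWeight_mem_stdSimplex hP hdD)
  have := isProbabilityMeasure_discMeasure hμ0
  have : IsProbabilityMeasure (dataMeasure P dD μ0 n n0) := by
    unfold dataMeasure
    infer_instance
  have hlog (c : ℝ) : 2 * c / (δ / 2) = 4 * c / δ := by ring
  have hbad := measureReal_pi_exists_mul_sqrt_log_lt_abs_empDev_le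
    (μ := discMeasure (tupleWeight P dD)) (g := fun q => tupleLag r γ f α q.1 q.2) (V ×ˢ W)
    (fun _ _ => measurable_of_finite _) (B := α * Bf + Bw * ((1 + γ) * Bv + 1)) (by positivity)
    (fun q hq => abs_tupleLag_le hγ0 hr hα hBw hfB (hV _ (Finset.mem_product.mp hq).1)
      (hW _ (Finset.mem_product.mp hq).2)) hn (half_pos hδ)
  have hbad0 := measureReal_pi_exists_mul_sqrt_log_lt_abs_empDev_le (μ := discMeasure μ0)
    (g := fun v => v) V (fun _ _ => measurable_of_finite _) hBv hV hn0 (half_pos hδ)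
  rw [hlog, Finset.card_product, Nat.cast_mul] at hbad
  rw [hlog] at hbad0
  refine one_sub_ofReal_le_measure <| (measureReal_mono fun ω hω => ?_).trans <|
    (measureReal_prod_fst_mem_or_snd_mem_le _ _).trans <| (add_le_add hbad hbad0).trans_eq
      (add_halves δ)
  by_contra hgood
  simp only [Set.mem_ofPred_eq, not_or, not_exists, not_and, not_lt] at hgood
  refine hω fun v hv w hw => ?_
  rw [empLag_sub_Lag hP hμ0.1 hdD, epsStat, mul_assoc]
  refine (abs_add_le _ _).trans (add_le_add ?_ (hgood.1 (v, w) (Finset.mk_mem_product hv hw)))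
  rw [abs_mul, abs_of_pos (sub_pos.mpr hγ1)]
  exact mul_le_mul_of_nonneg_left (hgood.2 v hv) (sub_nonneg.mpr hγ1.le)

end Empirical

section SampleSize

variable {γ α Bv Bf Bw Be δ ε Mf : ℝ}

lemma mul_sqrt_div_le {B L m t : ℝ} (hm : 0 < m) (ht : 0 ≤ t) (h : B ^ 2 * L ≤ m * t ^ 2) :
    B * √(L / m) ≤ t :=
  calc B * √(L / m) ≤ √(B ^ 2) * √(L / m) := by
        gcongr
        exact Real.le_sqrt_of_sq_le le_rfl
    _ = √(B ^ 2 * L / m) := by rw [← Real.sqrt_mul (sq_nonneg B), mul_div_assoc]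
    _ ≤ t := (Real.sqrt_le_left ht).mpr ((div_le_iff₀' hm).mpr h)

/-- The common accuracy demanded of the initial-state average and of the transition average.
Both deviations enter the suboptimality as `√(8 * (2 * τ) / (α * Mf))`, which at
`α = ε / (4 * Bf)` equals `ε * (1 - γ) / 4`. -/
noncomputable def deviationTol (ε Mf γ Bf : ℝ) : ℝ :=
  ε ^ 3 * Mf * (1 - γ) ^ 2 / (1024 * Bf)

lemma bias_add_sqrt_deviationTol_eq (hε : 0 < ε) (hMf : 0 < Mf) (hBf : 0 < Bf) (hγ1 : γ < 1) :
    2 * (ε / (4 * Bf)) * Bf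
      + 2 / (1 - γ) * √(8 * (2 * deviationTol ε Mf γ Bf) / (ε / (4 * Bf) * Mf)) = ε := by
  have hγ : 0 < 1 - γ := sub_pos.mpr hγ1
  have hsq : 8 * (2 * deviationTol ε Mf γ Bf) / (ε / (4 * Bf) * Mf) = (ε * (1 - γ) / 4) ^ 2 := by
    rw [deviationTol]
    field_simp
    norm_num
  rw [hsq, Real.sqrt_sq (by positivity)]
  field_simp
  norm_num

lemma epsStat_le_two_mul_deviationTol (hε : 0 < ε) (hMf : 0 < Mf) (hBf : 0 < Bf) (hγ1 : γ < 1)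
    {nV nW n n0 : ℕ} (hn : 0 < n) (hn0 : 0 < n0)
    (hnle : 131072 * (ε * Bf + 4 * Bw * Be * Bf) ^ 2 / (ε ^ 6 * Mf ^ 2 * (1 - γ) ^ 4)
      * Real.log (4 * (nV : ℝ) * (nW : ℝ) / δ) ≤ (n : ℝ))
    (hn0le : 131072 * (4 * Bv * Bf) ^ 2 / (ε ^ 6 * Mf ^ 2 * (1 - γ) ^ 2)
      * Real.log (4 * (nV : ℝ) / δ) ≤ (n0 : ℝ)) :
    epsStat γ (ε / (4 * Bf)) Bv Bf Bw Be δ nV nW n n0 ≤ 2 * deviationTol ε Mf γ Bf := by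
  have hγ : 0 < 1 - γ := sub_pos.mpr hγ1
  have htol : 0 < deviationTol ε Mf γ Bf := by rw [deviationTol]; positivity
  rw [epsStat, ← mul_assoc 4, two_mul (deviationTol ε Mf γ Bf)]
  refine add_le_add (mul_sqrt_div_le (Nat.cast_pos.mpr hn0) htol.le ?_)
    (mul_sqrt_div_le (Nat.cast_pos.mpr hn) htol.le ?_)
  · refine Eq.trans_le ?_ (mul_le_mul_of_nonneg_right hn0le (sq_nonneg _))
    rw [deviationTol]
    field_simp
    ring
  · refine Eq.trans_le ?_ (mul_le_mul_of_nonneg_right hnle (sq_nonneg _))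
    rw [deviationTol]
    field_simp
    ring

end SampleSize

theorem stmt8_general {S A : Type*} [Fintype S] [Fintype A] [Nonempty S] [Nonempty A]
    [MeasurableSpace S] [MeasurableSpace A]
    [MeasurableSingletonClass S] [MeasurableSingletonClass A]
    {P : S → A → S → ℝ} {r : S → A → ℝ} {μ0 : S → ℝ} {γ : ℝ} {dD : S → A → ℝ}
    (hP : ∀ s a, P s a ∈ stdSimplex ℝ S) (hμ0 : μ0 ∈ stdSimplex ℝ S)
    (hdD : Function.uncurry dD ∈ stdSimplex ℝ (S × A)) (hγ0 : 0 ≤ γ) (hγ1 : γ < 1)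
    (hr : ∀ s a, |r s a| ≤ 1) {f : ℝ → ℝ} {ε δ Mf Bw Bf Bv Be : ℝ} (hε : 0 < ε) (hδ : 0 < δ)
    (hMf : 0 < Mf) (hBf : 0 < Bf) (hf : StrongConvexOn (Set.Icc 0 Bw) Mf f)
    (hfB : ∀ x ∈ Set.Icc 0 Bw, |f x| ≤ Bf) (hBe : Be = (1 + γ) * Bv + 1)
    {π0 : S → A → ℝ} (hπ0 : IsPolicy π0) (hcov : ∀ s a, occ P μ0 γ π0 s a ≤ Bw * dD s a)
    {vst : S → ℝ} {wst : S → A → ℝ} (hsad : IsSaddleB P r μ0 γ dD f (ε / (4 * Bf)) Bw vst wst)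
    {V : Finset (S → ℝ)} {W : Finset (S → A → ℝ)} (hvst : vst ∈ V) (hwst : wst ∈ W)
    (hW : ∀ w ∈ W, ∀ s a, w s a ∈ Set.Icc 0 Bw) (hV : ∀ v ∈ V, ∀ s, |v s| ≤ Bv)
    {n n0 : ℕ} (hn : 0 < n) (hn0 : 0 < n0)
    (hnle : 131072 * (ε * Bf + 4 * Bw * Be * Bf) ^ 2 / (ε ^ 6 * Mf ^ 2 * (1 - γ) ^ 4)
      * Real.log (4 * (V.card : ℝ) * (W.card : ℝ) / δ) ≤ (n : ℝ))
    (hn0le : 131072 * (4 * Bv * Bf) ^ 2 / (ε ^ 6 * Mf ^ 2 * (1 - γ) ^ 2)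
      * Real.log (4 * (V.card : ℝ) / δ) ≤ (n0 : ℝ))
    {vhat : (Fin n → (S × A) × S) × (Fin n0 → S) → S → ℝ}
    {what : (Fin n → (S × A) × S) × (Fin n0 → S) → S → A → ℝ}
    (hout : ∀ ω, IsProRLOutput r γ f (ε / (4 * Bf)) V W ω.1 ω.2 (vhat ω) (what ω)) :
    1 - ENNReal.ofReal δ ≤ dataMeasure P dD μ0 n n0 {ω |
      Jret P r μ0 γ π0 - Jret P r μ0 γ (extractPolicy (behPolicy dD) (what ω)) ≤ ε} := by
  have hα : 0 < ε / (4 * Bf) := by positivity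
  have hBw : 0 ≤ Bw := by
    obtain ⟨s⟩ := ‹Nonempty S›
    obtain ⟨a⟩ := ‹Nonempty A›
    exact (hsad.1 s a).1.trans (hsad.1 s a).2
  have hBv : 0 ≤ Bv := by
    obtain ⟨s⟩ := ‹Nonempty S›
    exact (abs_nonneg _).trans (hV vst hvst s)
  refine (one_sub_ofReal_le_dataMeasure_abs_empLag_sub_Lag_le hP hμ0 hdD hγ0 hγ1 hr hα.le hBw hBv
    hfB hV hW hn hn0 hδ).trans <| measure_mono fun ω hω => ?_
  have hdev (v : S → ℝ) (hv : v ∈ V) (w : S → A → ℝ) (hw : w ∈ W) :=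
    (hω v hv w hw).trans <|
      epsStat_le_two_mul_deviationTol hε hMf hBf hγ1 hn hn0 (hBe ▸ hnle) hn0le
  exact ((hout ω).Jret_sub_le hP hμ0 hγ0 hγ1 hr hdD hα hMf hBw hf hfB hπ0 hcov hsad hvst hwst hW
    hdev).trans_eq (bias_add_sqrt_deviationTol_eq hε hMf hBf hγ1)

/-- Corollary 4: single-policy concentrability, competing with `π*₀`. -/
theorem stmt8 :
    ∃ C1 : ℝ, 0 < C1 ∧
    ∀ (S A : Type) [Fintype S] [Fintype A] [Nonempty S] [Nonempty A]
      [MeasurableSpace S] [MeasurableSpace A]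
      [MeasurableSingletonClass S] [MeasurableSingletonClass A]
      (P : S → A → S → ℝ) (r : S → A → ℝ) (μ0 : S → ℝ) (γ : ℝ) (dD : S → A → ℝ),
      MDPAssumptions P r μ0 γ dD →
      -- the data distribution is the occupancy of the behavior policy
      (∀ s a, dD s a = occ P μ0 γ (behPolicy dD) s a) →
      ∀ (f f' : ℝ → ℝ) (ε δ : ℝ), 0 < ε → 0 < δ → δ < 1 →
      ∀ (Mf Bw0 Bf'0 Bf0 Bv0 Be0 : ℝ) (π0 : S → A → ℝ), 1 < Bw0 → 0 < Bf0 →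
      -- π*₀ is an optimal policy whose occupancy d*₀ is covered: d*₀/d^D ≤ B_{w,0}
      IsPolicy π0 →
      (∀ π : S → A → ℝ, IsPolicy π → Jret P r μ0 γ π ≤ Jret P r μ0 γ π0) →
      (∀ s a, occ P μ0 γ π0 s a ≤ Bw0 * dD s a) →
      -- regularity of f on [0, B_{w,0}], with α'_ε := ε/(4 B_{f,0})
      RegAssumptions f f' Mf Bw0 Bf'0 Bf0 →
      Bv0 = (ε / (4 * Bf0) * Bf'0 + 1) / (1 - γ) → Be0 = (1 + γ) * Bv0 + 1 →
      -- saddle point of the constrained LP (B_w = B_{w,0}) at α = α'_ε, realizable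
      ∀ (vst : S → ℝ) (wst : S → A → ℝ),
        IsSaddleB P r μ0 γ dD f (ε / (4 * Bf0)) Bw0 vst wst →
      ∀ (V : Finset (S → ℝ)) (W : Finset (S → A → ℝ)),
        vst ∈ V → wst ∈ W →
        (∀ w ∈ W, ∀ s a, 0 ≤ w s a ∧ w s a ≤ Bw0) →
        (∀ v ∈ V, ∀ s, |v s| ≤ Bv0) →
      ∀ (n n0 : ℕ), 0 < n → 0 < n0 →
        C1 * (ε * Bf0 + 4 * Bw0 * Be0 * Bf0) ^ 2 / (ε ^ 6 * Mf ^ 2 * (1 - γ) ^ 4)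
            * Real.log (4 * (V.card : ℝ) * (W.card : ℝ) / δ) ≤ (n : ℝ) →
        C1 * (4 * Bv0 * Bf0) ^ 2 / (ε ^ 6 * Mf ^ 2 * (1 - γ) ^ 2)
            * Real.log (4 * (V.card : ℝ) / δ) ≤ (n0 : ℝ) →
      ∀ (vhat : (Fin n → (S × A) × S) × (Fin n0 → S) → S → ℝ)
        (what : (Fin n → (S × A) × S) × (Fin n0 → S) → S → A → ℝ),
        (∀ ω, IsProRLOutput r γ f (ε / (4 * Bf0)) V W ω.1 ω.2 (vhat ω) (what ω)) →
        1 - ENNReal.ofReal δ ≤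
          dataMeasure P dD μ0 n n0 {ω |
            Jret P r μ0 γ π0
              - Jret P r μ0 γ (extractPolicy (behPolicy dD) (what ω)) ≤ ε } :=
  ⟨131072, by norm_num, fun _ _ _ _ _ _ _ _ _ _ _ _ _ _ _ hM _ _ _ _ _ hε hδ _ _ _ _ _ _ _ _ _ hBf
      hπ0 _ hcov hreg _ hBe _ _ hsad _ _ hvst hwst hW hV _ _ hn hn0 hnle hn0le _ _ hout =>
    stmt8_general (fun s a => ⟨hM.P_nonneg s a, hM.P_sum s a⟩)
      ⟨fun s => (hM.μ0_pos s).le, hM.μ0_sum⟩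
      (uncurry_mem_stdSimplex_iff.mpr ⟨hM.dD_nonneg, hM.dD_sum⟩) hM.γ_nonneg hM.γ_lt_one
      (fun s a => abs_le.mpr ⟨by linarith [hM.r_nonneg s a], hM.r_le_one s a⟩) hε hδ hreg.Mf_pos
      hBf ⟨convex_Icc _ _, fun _ _ _ _ => hreg.strong.2 trivial trivial⟩
      (fun x hx => hreg.f_bdd x hx.1 hx.2) hBe hπ0 hcov hsad hvst hwst hW hV hn hn0 hnle hn0le
      hout⟩

end ProRL
end

section
/- Fix δ ∈ (0,1). Suppose 0 ≤ w ≤ B_{w,α} for all w ∈ W, |f(x)| ≤ B_{f,α} for 0 ≤ x ≤ B_{w,α}, and ‖v‖_∞ ≤ B_{v,α} for all v ∈ V. Then with probability at least 1−δ over the draw of the datasets, simultaneously for all v ∈ V and w ∈ W: |L̂_α(v,w) − L_α(v,w)| ≤ (α·B_{f,α} + B_{w,α}·B_{e,α})·√(2·log(4|V||W|/δ)/n) + (1−γ)·B_{v,α}·√(2·log(4|V|/δ)/n0), where B_{e,α} = (1+γ)·B_{v,α} + 1. -/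
open MeasureTheory
open scoped BigOperators ENNReal

namespace ProRL

variable {S A : Type*} [Fintype S] [Fintype A]

/-!
For fixed `(v, w)` the deviation of the empirical Lagrangian from `L_α(v, w)` splits into that of
the average of `w(s,a) (r(s,a) + γ v(s') - v(s)) - α f(w(s,a))` over the transitions, a function
bounded by `α B_f + B_w B_e`, and `1 - γ` times that of the average of `v`, bounded by `B_v`, over
the initial states. Each average obeys Hoeffding's inequality. Spending failure probability `δ / 2`
on each, with a union bound over the `|V| |W|` pairs for the transitions but only over the `|V|`
value functions for the initial states, gives the two logarithms.
-/

section Concentration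

open ProbabilityTheory

open scoped NNReal

variable {Ω : Type*} [MeasurableSpace Ω] {μ : Measure Ω}

theorem hasSubgaussianMGF_sub_integral_of_abs_le [IsProbabilityMeasure μ] {X : Ω → ℝ}
    (hX : AEMeasurable X μ) {B : ℝ} (hB : ∀ᵐ ω ∂μ, |X ω| ≤ B) :
    HasSubgaussianMGF (fun ω => X ω - ∫ ω, X ω ∂μ) (‖B‖₊ ^ 2) μ := by
  have hhalf : ‖B - -B‖₊ / 2 = ‖B‖₊ := by
    rw [sub_neg_eq_add, ← two_mul, nnnorm_mul, Real.nnnorm_ofNat,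
      mul_div_cancel_left₀ _ (two_ne_zero' ℝ≥0)]
  simpa only [hhalf] using hasSubgaussianMGF_of_mem_Icc hX (hB.mono fun _ => abs_le.mp)

theorem measureReal_sqrt_lt_abs_le_of_hasSubgaussianMGF [IsFiniteMeasure μ] {X : Ω → ℝ} {c : ℝ≥0}
    (hX : HasSubgaussianMGF X c μ) {L : ℝ} (hL : 0 ≤ L) :
    μ.real {ω | √(2 * c * L) < |X ω|} ≤ 2 * Real.exp (-L) := by
  rcases eq_or_ne c 0 with rfl | hc
  · -- The Chernoff bound `exp (-ε ^ 2 / (2 * c))` is trivial here, but `X` vanishes a.e.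
    have hnever : ∀ᵐ ω ∂μ, ¬ √(2 * (0 : ℝ≥0) * L) < |X ω| := by
      filter_upwards [hX.ae_eq_zero_of_hasSubgaussianMGF_zero] with ω hω
      simp [hω]
    have hnull : μ {ω | √(2 * (0 : ℝ≥0) * L) < |X ω|} = 0 := by
      simpa only [not_not] using ae_iff.mp hnever
    rw [measureReal_def, hnull, ENNReal.toReal_zero]
    positivity
  set ε := √(2 * c * L) with hε
  have hexp : -ε ^ 2 / (2 * c) = -L := by
    rw [hε, Real.sq_sqrt (by positivity)]
    field_simp
  have hupper := hX.measure_ge_le (Real.sqrt_nonneg _ : 0 ≤ ε)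
  have hlower := hX.neg.measure_ge_le (Real.sqrt_nonneg _ : 0 ≤ ε)
  rw [hexp] at hupper hlower
  calc μ.real {ω | ε < |X ω|}
      ≤ μ.real ({ω | ε ≤ X ω} ∪ {ω | ε ≤ (-X) ω}) :=
        measureReal_mono fun _ hω => (lt_abs.mp hω).imp (le_of_lt (α := ℝ)) (le_of_lt (α := ℝ))
    _ ≤ μ.real {ω | ε ≤ X ω} + μ.real {ω | ε ≤ (-X) ω} := measureReal_union_le _ _
    _ ≤ 2 * Real.exp (-L) := by linarith

theorem hasSubgaussianMGF_sum_pi {ι : Type*} [Fintype ι] {Ω : ι → Type*}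
    [∀ i, MeasurableSpace (Ω i)] {μ : ∀ i, Measure (Ω i)} [∀ i, IsProbabilityMeasure (μ i)]
    {X : ∀ i, Ω i → ℝ} {c : ι → ℝ≥0} (hX : ∀ i, HasSubgaussianMGF (X i) (c i) (μ i)) :
    HasSubgaussianMGF (fun ω : ∀ i, Ω i => ∑ i, X i (ω i)) (∑ i, c i) (Measure.pi μ) := by
  refine .sum_of_iIndepFun (iIndepFun_pi fun i => (hX i).aemeasurable) fun i _ => ?_
  refine .of_map (measurable_pi_apply i).aemeasurable ?_
  rw [(measurePreserving_eval μ i).map_eq]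
  exact hX i

variable [IsProbabilityMeasure μ] {ι κ : Type*}

theorem one_sub_card_mul_le_measure_forall {F : Finset κ} {p : κ → Ω → Prop} {a : ℝ≥0∞}
    (h : ∀ k ∈ F, μ {ω | ¬p k ω} ≤ a) : 1 - F.card * a ≤ μ {ω | ∀ k ∈ F, p k ω} := by
  have hbad : μ {ω | ∀ k ∈ F, p k ω}ᶜ ≤ F.card * a :=
    calc μ {ω | ∀ k ∈ F, p k ω}ᶜ = μ (⋃ k ∈ F, {ω | ¬p k ω}) := by congr 1; ext; simp
      _ ≤ ∑ k ∈ F, μ {ω | ¬p k ω} := measure_biUnion_finset_le _ _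
      _ ≤ F.card * a := by simpa only [nsmul_eq_mul] using Finset.sum_le_card_nsmul _ _ _ h
  rw [tsub_le_iff_right, ← measure_univ (μ := μ)]
  exact (measure_univ_le_add_compl _).trans (by gcongr)

theorem one_sub_add_le_prod_prod {Ω' : Type*} [MeasurableSpace Ω'] {ν : Measure Ω'} [SFinite ν]
    {s : Set Ω} {t : Set Ω'} {a b : ℝ≥0∞} (hs : 1 - a ≤ μ s) (ht : 1 - b ≤ ν t) :
    1 - (a + b) ≤ (μ.prod ν) (s ×ˢ t) := by
  rw [Measure.prod_prod]
  rw [tsub_le_iff_right] at hs ht ⊢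
  calc 1 ≤ μ s + a := hs
    _ ≤ μ s * (ν t + b) + a := by gcongr; exact le_mul_of_one_le_right' ht
    _ ≤ μ s * ν t + b + a := by
        rw [mul_add]
        gcongr
        exact mul_le_of_le_one_left' prob_le_one
    _ = μ s * ν t + (a + b) := by ring

variable [Fintype ι] [Nonempty ι]

theorem measureReal_pi_lt_abs_average_sub_integral_le {g : Ω → ℝ} (hg : AEMeasurable g μ) {B : ℝ}
    (hB : ∀ᵐ ω ∂μ, |g ω| ≤ B) {L : ℝ} (hL : 0 ≤ L) :
    (Measure.pi fun _ : ι => μ).real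
        {D | B * √(2 * L / Fintype.card ι) <
          |(Fintype.card ι : ℝ)⁻¹ * ∑ i, g (D i) - ∫ ω, g ω ∂μ|}
      ≤ 2 * Real.exp (-L) := by
  have hB₀ : 0 ≤ B := let ⟨_, h⟩ := hB.exists; (abs_nonneg _).trans h
  set m : ℝ := (Fintype.card ι : ℝ) with hm
  have hm₀ : 0 < m := by rw [hm]; exact_mod_cast Fintype.card_pos
  have hsum := hasSubgaussianMGF_sum_pi fun _ : ι => hasSubgaussianMGF_sub_integral_of_abs_le hg hB
  refine (measureReal_mono fun D hD => ?_).trans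
    (measureReal_sqrt_lt_abs_le_of_hasSubgaussianMGF hsum hL)
  have hscale : ∑ i, (g (D i) - ∫ ω, g ω ∂μ) = m * (m⁻¹ * ∑ i, g (D i) - ∫ ω, g ω ∂μ) := by
    rw [mul_sub, mul_inv_cancel_left₀ hm₀.ne']
    simp [hm]
  have hradius : √(2 * (∑ _i : ι, ‖B‖₊ ^ 2 : ℝ≥0) * L) = m * (B * √(2 * L / m)) := by
    rw [← Real.sqrt_sq (mul_nonneg hm₀.le (mul_nonneg hB₀ (Real.sqrt_nonneg _))), mul_pow, mul_pow,
      Real.sq_sqrt (by positivity)]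
    simp only [Finset.sum_const, Finset.card_univ, nsmul_eq_mul, NNReal.coe_mul,
      NNReal.coe_natCast, NNReal.coe_pow, coe_nnnorm, Real.norm_eq_abs, sq_abs, ← hm]
    field_simp
  rw [Set.mem_ofPred_eq, hscale, hradius, abs_mul, abs_of_pos hm₀]
  exact mul_lt_mul_of_pos_left hD hm₀

theorem one_sub_le_pi_forall_abs_average_sub_integral_le {F : Finset κ} {g : κ → Ω → ℝ}
    (hg : ∀ k ∈ F, AEMeasurable (g k) μ) {B : ℝ} (hB : ∀ k ∈ F, ∀ᵐ ω ∂μ, |g k ω| ≤ B) {δ : ℝ}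
    (hδ₀ : 0 < δ) (hδ₁ : δ ≤ 1) :
    1 - ENNReal.ofReal δ ≤ (Measure.pi fun _ : ι => μ)
      {D | ∀ k ∈ F, |(Fintype.card ι : ℝ)⁻¹ * ∑ i, g k (D i) - ∫ ω, g k ω ∂μ|
        ≤ B * √(2 * Real.log (2 * (F.card : ℝ) / δ) / Fintype.card ι)} := by
  rcases F.eq_empty_or_nonempty with rfl | hF
  · simp
  set L := Real.log (2 * (F.card : ℝ) / δ) with hL
  have hcard : (1 : ℝ) ≤ F.card := by exact_mod_cast hF.card_pos
  have hL₀ : 0 ≤ L := Real.log_nonneg (by rw [le_div_iff₀ hδ₀]; linarith)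
  have hbudget : F.card * (2 * Real.exp (-L)) = δ := by
    rw [hL, Real.exp_neg, Real.exp_log (by positivity)]
    field_simp
  rw [← hbudget, ENNReal.ofReal_mul (Nat.cast_nonneg _), ENNReal.ofReal_natCast]
  refine one_sub_card_mul_le_measure_forall fun k hk => ?_
  rw [← ofReal_measureReal]
  simp only [not_le]
  exact ENNReal.ofReal_le_ofReal
    (measureReal_pi_lt_abs_average_sub_integral_le (hg k hk) (hB k hk) hL₀)

end Concentration

section DiscreteMeasure

variable {X : Type*} [MeasurableSpace X] {p : X → ℝ}

theorem isProbabilityMeasure_discMeasure_s14 (hp : ∀ x, 0 ≤ p x) (hsum : HasSum p 1) :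
    IsProbabilityMeasure (discMeasure p) := by
  refine ⟨?_⟩
  simp only [discMeasure, Measure.sum_apply _ MeasurableSet.univ, Measure.smul_apply, measure_univ,
    smul_eq_mul, mul_one]
  rw [← ENNReal.ofReal_tsum_of_nonneg hp hsum.summable, hsum.tsum_eq, ENNReal.ofReal_one]

variable [MeasurableSingletonClass X]

theorem integral_discMeasure_s14 [Countable X] {E : Type*} [NormedAddCommGroup E] [NormedSpace ℝ E]
    [FiniteDimensional ℝ E] (hp : ∀ x, 0 ≤ p x) (g : X → E) :
    ∫ x, g x ∂discMeasure p = ∑' x, p x • g x := by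
  rw [discMeasure, integral_sum_dirac fun _ => ENNReal.ofReal_ne_top]
  simp only [ENNReal.toReal_ofReal (hp _)]

theorem one_sub_le_pi_discMeasure_forall_abs_average_sub_sum_le [Fintype X]
    [IsProbabilityMeasure (discMeasure p)] {ι κ : Type*} [Fintype ι] [Nonempty ι]
    (hp : ∀ x, 0 ≤ p x) {F : Finset κ} {g : κ → X → ℝ} {B : ℝ}
    (hB : ∀ k ∈ F, ∀ x, |g k x| ≤ B) {δ : ℝ} (hδ₀ : 0 < δ) (hδ₁ : δ ≤ 1) :
    1 - ENNReal.ofReal δ ≤ (Measure.pi fun _ : ι => discMeasure p)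
      {D | ∀ k ∈ F, |(Fintype.card ι : ℝ)⁻¹ * ∑ i, g k (D i) - ∑ x, p x * g k x|
        ≤ B * √(2 * Real.log (2 * (F.card : ℝ) / δ) / Fintype.card ι)} := by
  have h := one_sub_le_pi_forall_abs_average_sub_integral_le (ι := ι) (μ := discMeasure p)
    (fun k _ => (measurable_of_finite (g k)).aemeasurable)
    (fun k hk => ae_of_all _ (hB k hk)) hδ₀ hδ₁
  simpa only [integral_discMeasure_s14 hp, tsum_fintype, smul_eq_mul] using h

end DiscreteMeasure

section Lagrangian

/-- The temporal-difference error `r(s,a) + γ v(s') − v(s)` of a transition `((s,a),s')`: the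
one-sample version of the Bellman residual `eV`. -/
def tdError {S A : Type*} (r : S → A → ℝ) (γ : ℝ) (v : S → ℝ) (x : (S × A) × S) : ℝ :=
  r x.1.1 x.1.2 + γ * v x.2 - v x.1.1

/-- The contribution of a single transition `((s,a),s')` to the Lagrangian. The regularizer is
included, so that `L̂_α` and `L_α` each involve just one average of it. -/
def transitionLag {S A : Type*} (r : S → A → ℝ) (γ : ℝ) (f : ℝ → ℝ) (α : ℝ) (v : S → ℝ)
    (w : S → A → ℝ) (x : (S × A) × S) : ℝ :=
  w x.1.1 x.1.2 * tdError r γ v x - α * f (w x.1.1 x.1.2)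

section Transition

variable {S A : Type*} {r : S → A → ℝ} {γ : ℝ} {f : ℝ → ℝ} {α : ℝ} {v : S → ℝ} {w : S → A → ℝ}

theorem abs_tdError_le {R Bv : ℝ} (hr : ∀ s a, |r s a| ≤ R) (hγ : 0 ≤ γ) (hv : ∀ s, |v s| ≤ Bv)
    (x : (S × A) × S) : |tdError r γ v x| ≤ (1 + γ) * Bv + R :=
  calc |tdError r γ v x|
      ≤ |r x.1.1 x.1.2| + |γ * v x.2| + |v x.1.1| :=
        (abs_sub _ _).trans (by gcongr; exact abs_add_le _ _)
    _ ≤ R + γ * Bv + Bv := by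
        rw [abs_mul, abs_of_nonneg hγ]
        gcongr
        exacts [hr _ _, hv _, hv _]
    _ = (1 + γ) * Bv + R := by ring

theorem abs_transitionLag_le {Bw Bf Be : ℝ} (hα : 0 ≤ α) (hw : ∀ s a, |w s a| ≤ Bw)
    (hf : ∀ s a, |f (w s a)| ≤ Bf) (he : ∀ x, |tdError r γ v x| ≤ Be) (x : (S × A) × S) :
    |transitionLag r γ f α v w x| ≤ α * Bf + Bw * Be :=
  calc |transitionLag r γ f α v w x|
      ≤ |w x.1.1 x.1.2| * |tdError r γ v x| + α * |f (w x.1.1 x.1.2)| :=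
        (abs_sub _ _).trans_eq (by rw [abs_mul, abs_mul, abs_of_nonneg hα])
    _ ≤ Bw * Be + α * Bf := by
        gcongr
        exacts [(abs_nonneg _).trans (hw x.1.1 x.1.2), hw _ _, he x, hf _ _]
    _ = α * Bf + Bw * Be := add_comm _ _

theorem empLag_eq_add_average_transitionLag {n n0 : ℕ} (D : Fin n → (S × A) × S)
    (D0 : Fin n0 → S) :
    empLag r γ f α D D0 v w = (1 - γ) * ((n0 : ℝ)⁻¹ * ∑ j, v (D0 j))
      + (n : ℝ)⁻¹ * ∑ i, transitionLag r γ f α v w (D i) := by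
  simp only [empLag, transitionLag, tdError, Finset.sum_sub_distrib, ← Finset.mul_sum]
  ring

variable [Fintype S] {P : S → A → S → ℝ}

theorem sum_mul_tdError {s : S} {a : A} (hP : ∑ s', P s a s' = 1) :
    ∑ s', P s a s' * tdError r γ v ((s, a), s') = eV P r γ v s a := by
  simp only [tdError, eV, mul_sub, mul_add, Finset.sum_sub_distrib, Finset.sum_add_distrib,
    ← Finset.sum_mul, hP, one_mul, mul_left_comm _ γ, ← Finset.mul_sum]

theorem sum_mul_transitionLag {s : S} {a : A} (hP : ∑ s', P s a s' = 1) :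
    ∑ s', P s a s' * transitionLag r γ f α v w ((s, a), s')
      = w s a * eV P r γ v s a - α * f (w s a) := by
  simp only [transitionLag, mul_sub, Finset.sum_sub_distrib, ← Finset.sum_mul, hP, one_mul,
    mul_left_comm _ (w s a), ← Finset.mul_sum, sum_mul_tdError hP]

end Transition

variable {P : S → A → S → ℝ} {r : S → A → ℝ} {μ0 : S → ℝ} {γ : ℝ} {dD : S → A → ℝ} {f : ℝ → ℝ}
  {α : ℝ} {v : S → ℝ} {w : S → A → ℝ}

theorem sum_tupleWeight_mul (h : (S × A) × S → ℝ) :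
    ∑ x, tupleWeight P dD x * h x = ∑ s, ∑ a, dD s a * ∑ s', P s a s' * h ((s, a), s') := by
  simp only [Fintype.sum_prod_type, tupleWeight, Finset.mul_sum, mul_assoc]

theorem sum_tupleWeight (hP : ∀ s a, ∑ s', P s a s' = 1) :
    ∑ x, tupleWeight P dD x = ∑ s, ∑ a, dD s a := by
  simpa only [Pi.one_apply, mul_one, hP] using sum_tupleWeight_mul (P := P) (dD := dD) 1

theorem Lag_eq_add_sum_transitionLag (hP : ∀ s a, ∑ s', P s a s' = 1) :
    Lag P r μ0 γ dD f α v w = (1 - γ) * ∑ s, μ0 s * v s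
      + ∑ x, tupleWeight P dD x * transitionLag r γ f α v w x := by
  simp only [sum_tupleWeight_mul, sum_mul_transitionLag (hP _ _), mul_sub, Finset.sum_sub_distrib,
    Lag, mul_left_comm _ α, ← Finset.mul_sum]
  ring

theorem abs_empLag_sub_Lag_le (hP : ∀ s a, ∑ s', P s a s' = 1) (hγ : γ ≤ 1) {n n0 : ℕ}
    (D : Fin n → (S × A) × S) (D0 : Fin n0 → S) :
    |empLag r γ f α D D0 v w - Lag P r μ0 γ dD f α v w|
      ≤ |(n : ℝ)⁻¹ * ∑ i, transitionLag r γ f α v w (D i)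
          - ∑ x, tupleWeight P dD x * transitionLag r γ f α v w x|
        + (1 - γ) * |(n0 : ℝ)⁻¹ * ∑ j, v (D0 j) - ∑ s, μ0 s * v s| := by
  rw [empLag_eq_add_average_transitionLag, Lag_eq_add_sum_transitionLag hP, add_sub_add_comm,
    ← mul_sub, add_comm]
  refine (abs_add_le _ _).trans_eq ?_
  rw [abs_mul, abs_of_nonneg (sub_nonneg.mpr hγ)]

end Lagrangian

theorem stmt14_general
    {S A : Type*} [Fintype S] [Fintype A] [MeasurableSpace S] [MeasurableSpace A]
    [MeasurableSingletonClass S] [MeasurableSingletonClass A]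
    {P : S → A → S → ℝ} {r : S → A → ℝ} {μ0 : S → ℝ} {γ : ℝ} {dD : S → A → ℝ}
    (hP₀ : ∀ s a s', 0 ≤ P s a s') (hP₁ : ∀ s a, ∑ s', P s a s' = 1)
    {R : ℝ} (hr : ∀ s a, |r s a| ≤ R) (hγ₀ : 0 ≤ γ) (hγ₁ : γ ≤ 1)
    (hμ₀ : ∀ s, 0 ≤ μ0 s) (hμ₁ : ∑ s, μ0 s = 1)
    (hd₀ : ∀ s a, 0 ≤ dD s a) (hd₁ : ∑ s, ∑ a, dD s a = 1)
    {f : ℝ → ℝ} {α δ : ℝ} (hα : 0 ≤ α) (hδ₀ : 0 < δ) (hδ₁ : δ ≤ 1) {Bw Bf Bv : ℝ}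
    {V : Finset (S → ℝ)} {W : Finset (S → A → ℝ)}
    (hW : ∀ w ∈ W, ∀ s a, |w s a| ≤ Bw) (hf : ∀ w ∈ W, ∀ s a, |f (w s a)| ≤ Bf)
    (hV : ∀ v ∈ V, ∀ s, |v s| ≤ Bv) {n n0 : ℕ} (hn : 0 < n) (hn0 : 0 < n0) :
    1 - ENNReal.ofReal δ ≤
      dataMeasure P dD μ0 n n0 {ω |
        ∀ v ∈ V, ∀ w ∈ W,
          |empLag r γ f α ω.1 ω.2 v w - Lag P r μ0 γ dD f α v w|
            ≤ (α * Bf + Bw * ((1 + γ) * Bv + R)) *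
                √(2 * Real.log (4 * ((V.card : ℝ) * (W.card : ℝ)) / δ) / (n : ℝ))
              + (1 - γ) * Bv * √(2 * Real.log (4 * (V.card : ℝ) / δ) / (n0 : ℝ))} := by
  have : Nonempty (Fin n) := Fin.pos_iff_nonempty.mp hn
  have : Nonempty (Fin n0) := Fin.pos_iff_nonempty.mp hn0
  have htuple : ∀ x, 0 ≤ tupleWeight P dD x := fun _ => mul_nonneg (hd₀ _ _) (hP₀ _ _ _)
  have := isProbabilityMeasure_discMeasure_s14 htuple
    ((sum_tupleWeight hP₁).trans hd₁ ▸ hasSum_fintype _)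
  have := isProbabilityMeasure_discMeasure_s14 hμ₀ (hμ₁ ▸ hasSum_fintype μ0)
  have hδ₂ : δ / 2 ≤ 1 := (half_le_self hδ₀.le).trans hδ₁
  have htrans := one_sub_le_pi_discMeasure_forall_abs_average_sub_sum_le (ι := Fin n) htuple
    (F := V ×ˢ W) (g := fun k => transitionLag r γ f α k.1 k.2)
    (fun k hk => have ⟨hv, hw⟩ := Finset.mem_product.mp hk
      abs_transitionLag_le hα (hW _ hw) (hf _ hw) (abs_tdError_le hr hγ₀ (hV _ hv)))
    (half_pos hδ₀) hδ₂
  have hinit := one_sub_le_pi_discMeasure_forall_abs_average_sub_sum_le (ι := Fin n0) hμ₀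
    (g := id) hV (half_pos hδ₀) hδ₂
  have hjoint := one_sub_add_le_prod_prod htrans hinit
  rw [← ENNReal.ofReal_add (by positivity) (by positivity), add_halves] at hjoint
  refine hjoint.trans (measure_mono fun ω ⟨hω, hω0⟩ v hv w hw => ?_)
  have hlog (c : ℝ) : 2 * c / (δ / 2) = 4 * c / δ := by field_simp; ring
  simp only [Set.mem_ofPred_eq, Fintype.card_fin, Finset.card_product, Nat.cast_mul, hlog, id]
    at hω hω0
  refine (abs_empLag_sub_Lag_le hP₁ hγ₁ ω.1 ω.2).trans (add_le_add (hω (v, w) ?_) ?_)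
  · exact Finset.mk_mem_product hv hw
  · rw [mul_assoc]
    exact mul_le_mul_of_nonneg_left (hω0 v hv) (sub_nonneg.mpr hγ₁)

/-- Lemma 6: uniform concentration of the empirical Lagrangian. -/
theorem stmt14
    {S A : Type*} [Fintype S] [Fintype A] [Nonempty S] [Nonempty A]
    [MeasurableSpace S] [MeasurableSpace A]
    [MeasurableSingletonClass S] [MeasurableSingletonClass A]
    (P : S → A → S → ℝ) (r : S → A → ℝ) (μ0 : S → ℝ) (γ : ℝ) (dD : S → A → ℝ)
    (hMDP : MDPAssumptions P r μ0 γ dD)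
    (f : ℝ → ℝ) (α δ : ℝ) (hα : 0 ≤ α) (hδ0 : 0 < δ) (hδ1 : δ < 1)
    (Bw Bf Bv Be : ℝ)
    (hBe : Be = (1 + γ) * Bv + 1)
    (V : Finset (S → ℝ)) (W : Finset (S → A → ℝ))
    (hA4 : ∀ w ∈ W, ∀ s a, 0 ≤ w s a ∧ w s a ≤ Bw)
    (hfB : ∀ x, 0 ≤ x → x ≤ Bw → |f x| ≤ Bf)
    (hA6 : ∀ v ∈ V, ∀ s, |v s| ≤ Bv)
    (n n0 : ℕ) (hn : 0 < n) (hn0 : 0 < n0) :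
    1 - ENNReal.ofReal δ ≤
      dataMeasure P dD μ0 n n0 {ω |
        ∀ v ∈ V, ∀ w ∈ W,
          |empLag r γ f α ω.1 ω.2 v w - Lag P r μ0 γ dD f α v w|
            ≤ (α * Bf + Bw * Be) *
                Real.sqrt (2 * Real.log (4 * ((V.card : ℝ) * (W.card : ℝ)) / δ) / (n : ℝ))
              + (1 - γ) * Bv *
                Real.sqrt (2 * Real.log (4 * (V.card : ℝ) / δ) / (n0 : ℝ)) } := by
  rw [hBe]
  exact stmt14_general hMDP.P_nonneg hMDP.P_sum
    (fun s a => (abs_of_nonneg (hMDP.r_nonneg s a)).trans_le (hMDP.r_le_one s a)) hMDP.γ_nonneg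
    hMDP.γ_lt_one.le (fun s => (hMDP.μ0_pos s).le) hMDP.μ0_sum hMDP.dD_nonneg hMDP.dD_sum hα hδ0
    hδ1.le (fun w hw s a => (abs_of_nonneg (hA4 w hw s a).1).trans_le (hA4 w hw s a).2)
    (fun w hw s a => hfB _ (hA4 w hw s a).1 (hA4 w hw s a).2) hA6 hn hn0

end ProRL
end
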